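/- (Scott) A countable collection S of subsets of ℕ is a Scott set if and only if S = SSy(M) for some countable non-standard model M of Peano arithmetic. -/

import Mathlib

open FirstOrder FirstOrder.Language

/-- Function symbols of the language of arithmetic: `0`, `1`, `+`, `·`. -/
inductive arithFunc : ℕ → Type
  | zero : arithFunc 0
  | one : arithFunc 0
  | add : arithFunc 2
  | mul : arithFunc 2
  deriving DecidableEq

/-- Relation symbols of the language of arithmetic: `<`. -/
inductive arithRel : ℕ → Type
  | lt : arithRel 2
  deriving DecidableEq

/-- The first-order language of arithmetic `{0, 1, +, ·, <}`. -/
def arith : FirstOrder.Language := ⟨arithFunc, arithRel⟩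

namespace Arith

variable {M : Type*} [arith.Structure M]

/-- The interpretation of `0`. -/
def zeroM (M : Type*) [arith.Structure M] : M :=
  Structure.funMap (L := arith) arithFunc.zero ![]

/-- The interpretation of `1`. -/
def oneM (M : Type*) [arith.Structure M] : M :=
  Structure.funMap (L := arith) arithFunc.one ![]

/-- The interpretation of `+`. -/
def addM (x y : M) : M := Structure.funMap (L := arith) arithFunc.add ![x, y]

/-- The interpretation of `·`. -/
def mulM (x y : M) : M := Structure.funMap (L := arith) arithFunc.mul ![x, y]

/-- The interpretation of `<`. -/
def ltM (x y : M) : Prop := Structure.RelMap (L := arith) arithRel.lt ![x, y]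

/-- Non-strict order. -/
def leM (x y : M) : Prop := ltM x y ∨ x = y

/-- The numeral `n` in `M`: `0`, or `1 + 1 + ⋯ + 1`. -/
def numeral (M : Type*) [arith.Structure M] : ℕ → M
  | 0 => zeroM M
  | n + 1 => addM (numeral M n) (oneM M)

/-- The standard `arith`-structure on `ℕ`. -/
instance : arith.Structure ℕ where
  funMap {n} f v :=
    match f with
    | .zero => 0
    | .one => 1
    | .add => v 0 + v 1
    | .mul => v 0 * v 1
  RelMap {n} r v :=
    match r with
    | .lt => v 0 < v 1

/-- `M` is a model of Peano arithmetic: it satisfies the finitely many basic axioms of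
`PA` together with induction for all parametrically definable sets (which is equivalent
to the usual first-order induction scheme). -/
def IsPAModel (M : Type*) [arith.Structure M] : Prop :=
  (∀ x : M, addM x (zeroM M) = x) ∧
  (∀ x y : M, addM x (addM y (oneM M)) = addM (addM x y) (oneM M)) ∧
  (∀ x : M, mulM x (zeroM M) = zeroM M) ∧
  (∀ x y : M, mulM x (addM y (oneM M)) = addM (mulM x y) x) ∧
  (∀ x : M, ¬ ltM x (zeroM M)) ∧
  (∀ x y : M, ltM x (addM y (oneM M)) ↔ (ltM x y ∨ x = y)) ∧
  (∀ x : M, addM x (oneM M) ≠ zeroM M) ∧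
  (∀ x y : M, addM x (oneM M) = addM y (oneM M) → x = y) ∧
  (∀ s : Set M, Set.Definable₁ (Set.univ : Set M) arith s →
    zeroM M ∈ s → (∀ x ∈ s, addM x (oneM M) ∈ s) → ∀ x : M, x ∈ s)

/-- An element of `M` is standard if it is a numeral. -/
def IsStd (x : M) : Prop := ∃ n : ℕ, x = numeral M n

/-- `M` is a non-standard model of `PA`: a model of `PA` not isomorphic to the standard
model `ℕ`. -/
def NonstandardModel (M : Type*) [arith.Structure M] : Prop :=
  IsPAModel M ∧ ¬ Nonempty (M ≃[arith] ℕ)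

/-- `(x)_i = 1`: the `i`-th binary digit of `x` is `1`, for standard `i`.  This is expressed
by saying that `x = u·2^(i+1) + (2^i + v)` with `v < 2^i`, where `2^i`, `2^(i+1)` are
numerals. -/
def digitB (x : M) (i : ℕ) : Prop :=
  ∃ u v : M, x = addM (mulM u (numeral M (2 ^ (i + 1)))) (addM (numeral M (2 ^ i)) v) ∧
    ltM v (numeral M (2 ^ i))

/-- The standard system of `M`: the collection of subsets of `ℕ` coded by some
non-standard element of `M` (via its standard binary digits). -/
def SSy (M : Type*) [arith.Structure M] : Set (Set ℕ) :=
  {X | ∃ a : M, ¬ IsStd a ∧ ∀ i : ℕ, i ∈ X ↔ digitB a i}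

/-- A function `M → M` is definable (with parameters) if its graph is a definable set. -/
def DefinableFun₁ (f : M → M) : Prop :=
  Set.Definable (Set.univ : Set M) arith {v : Fin 2 → M | f (v 0) = v 1}

/-- A `k`-ary function `M^k → M` is definable (with parameters) if its graph is a
definable set. -/
def DefinableFun {k : ℕ} (F : (Fin k → M) → M) : Prop :=
  Set.Definable (Set.univ : Set M) arith
    {v : Fin (k + 1) → M | F (fun i => v i.castSucc) = v (Fin.last k)}

/-- `c` is the internal cardinality of the set `D ⊆ M`: there is an `M`-definable
bijection between `{x : x < c}` and `D`. -/
def InternalCard (D : Set M) (c : M) : Prop :=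
  ∃ f : M → M, DefinableFun₁ f ∧ Set.BijOn f {x : M | ltM x c} D

/-- `y = 2^x` in the model `M`, expressed via the existence of a definable function
satisfying the recursion of the base-`2` exponential up to `x`. -/
def IsPow2 (x y : M) : Prop :=
  ∃ f : M → M, DefinableFun₁ f ∧ f (zeroM M) = oneM M ∧
    (∀ z : M, ltM z x → f (addM z (oneM M)) = addM (f z) (f z)) ∧ f x = y

end Arith

namespace Arith

/-- Relativized partial recursiveness: `RecursiveIn O f` means the partial function `f`
is partial recursive in the total oracle `O`.  This mirrors `Nat.Partrec`, with an extra
constructor for the oracle. -/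
inductive RecursiveIn (O : ℕ → ℕ) : (ℕ →. ℕ) → Prop
  | zero : RecursiveIn O (pure 0)
  | succ : RecursiveIn O Nat.succ
  | left : RecursiveIn O ↑fun n : ℕ => n.unpair.1
  | right : RecursiveIn O ↑fun n : ℕ => n.unpair.2
  | oracle : RecursiveIn O O
  | pair {f g} : RecursiveIn O f → RecursiveIn O g →
      RecursiveIn O fun n => Nat.pair <$> f n <*> g n
  | comp {f g} : RecursiveIn O f → RecursiveIn O g → RecursiveIn O fun n => g n >>= f
  | prec {f g} : RecursiveIn O f → RecursiveIn O g → RecursiveIn O (Nat.unpaired fun a n =>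
      n.rec (f a) fun y IH => do let i ← IH; g (Nat.pair a (Nat.pair y i)))
  | rfind {f} : RecursiveIn O f →
      RecursiveIn O fun a => Nat.rfind fun n => (fun m => m = 0) <$> f (Nat.pair a n)

open Classical in
/-- The characteristic function of a set of natural numbers. -/
noncomputable def charFn (X : Set ℕ) : ℕ → ℕ := fun n => if n ∈ X then 1 else 0

/-- Turing reducibility between sets of natural numbers. -/
def TuringLE (Y X : Set ℕ) : Prop := RecursiveIn (charFn X) (charFn Y)

/-- The Turing join `X ⊕ Y = 2X ∪ (2Y + 1)`. -/
def turingJoin (X Y : Set ℕ) : Set ℕ :=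
  {n | ∃ m ∈ X, n = 2 * m} ∪ {n | ∃ m ∈ Y, n = 2 * m + 1}

/-- A Turing ideal: a collection of subsets of `ℕ` closed under Turing join and Turing
reducibility. -/
def TuringIdeal (S : Set (Set ℕ)) : Prop :=
  (∀ X ∈ S, ∀ Y ∈ S, turingJoin X Y ∈ S) ∧
  (∀ X ∈ S, ∀ Y : Set ℕ, TuringLE Y X → Y ∈ S)

/-- The Turing ideal generated by a collection of subsets of `ℕ`. -/
def tIdealGen (C : Set (Set ℕ)) : Set (Set ℕ) :=
  ⋂₀ {I | TuringIdeal I ∧ C ⊆ I}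

/-- `T ⊆ ℕ` codes a binary tree: the set of finite binary sequences whose codes lie in
`T` is closed under initial segments. -/
def IsBinTreeSet (T : Set ℕ) : Prop :=
  ∀ s : List Bool, Encodable.encode s ∈ T → ∀ t : List Bool, t <+: s → Encodable.encode t ∈ T

/-- The tree coded by `T` is infinite. -/
def TreeInf (T : Set ℕ) : Prop := {s : List Bool | Encodable.encode s ∈ T}.Infinite

/-- `P ⊆ ℕ`, viewed as an infinite branch via its characteristic function, is a path
through the tree coded by `T`. -/
def PathThrough (P T : Set ℕ) : Prop :=
  ∀ f : ℕ → Bool, (∀ i : ℕ, f i = true ↔ i ∈ P) →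
    ∀ m : ℕ, Encodable.encode (List.ofFn fun i : Fin m => f i) ∈ T

/-- A Scott set: a nonempty Turing ideal such that every infinite binary tree in it has
an infinite path in it. -/
def ScottSet (S : Set (Set ℕ)) : Prop :=
  S.Nonempty ∧ TuringIdeal S ∧
  ∀ T ∈ S, IsBinTreeSet T → TreeInf T → ∃ P ∈ S, PathThrough P T

open Classical in
/-- The characteristic function of a set, with values in `Bool`. -/
noncomputable def chi (X : Set ℕ) : ℕ → Bool := fun n => if n ∈ X then true else false

/-- The iterated Turing join `⊕_{i<k} X i`. -/
def joinMany : {k : ℕ} → (Fin k → Set ℕ) → Set ℕ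
  | 0, _ => ∅
  | (k + 1), X => turingJoin (joinMany fun i => X i.castSucc) (X (Fin.last k))

end Arith

namespace Arith

/-! ### Relative computability -/

theorem RecursiveIn.of_partrec {O : ℕ → ℕ} {f : ℕ →. ℕ} (h : Nat.Partrec f) :
    RecursiveIn O f := by
  induction h with
  | zero => exact .zero
  | succ => exact .succ
  | left => exact .left
  | right => exact .right
  | pair _ _ hf hg => exact .pair hf hg
  | comp _ _ hf hg => exact .comp hf hg
  | prec _ _ hf hg => exact .prec hf hg
  | rfind _ hf => exact .rfind hf

theorem RecursiveIn.of_primrec {O : ℕ → ℕ} {f : ℕ → ℕ} (h : Primrec f) :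
    RecursiveIn O (f : ℕ →. ℕ) :=
  .of_partrec (Nat.Partrec.of_primrec (Primrec.nat_iff.1 h))

theorem RecursiveIn.of_eq {O : ℕ → ℕ} {f g : ℕ →. ℕ} (hf : RecursiveIn O f)
    (H : ∀ n, f n = g n) : RecursiveIn O g :=
  (funext H : f = g) ▸ hf

theorem RecursiveIn.comp_total {O f g : ℕ → ℕ} (hf : RecursiveIn O (f : ℕ →. ℕ))
    (hg : RecursiveIn O (g : ℕ →. ℕ)) : RecursiveIn O ((fun n => f (g n) : ℕ → ℕ) : ℕ →. ℕ) := by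
  exact (RecursiveIn.comp hf hg).of_eq fun n => Part.bind_some (g n) (f : ℕ →. ℕ)

theorem RecursiveIn.pair_total {O f g : ℕ → ℕ} (hf : RecursiveIn O (f : ℕ →. ℕ))
    (hg : RecursiveIn O (g : ℕ →. ℕ)) :
    RecursiveIn O ((fun n => Nat.pair (f n) (g n) : ℕ → ℕ) : ℕ →. ℕ) := by
  exact (RecursiveIn.pair hf hg).of_eq fun n => by simp [Seq.seq]

/-- The list `[O (m - 1), …, O 0]`. -/
def history (O : ℕ → ℕ) : ℕ → List ℕ
  | 0 => []
  | m + 1 => O m :: history O m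

theorem history_reverse (O : ℕ → ℕ) (m : ℕ) :
    (history O m).reverse = (List.range m).map O := by
  induction m with
  | zero => rfl
  | succ m ih => simp [history, ih, List.range_succ]

theorem recursiveIn_history (O : ℕ → ℕ) :
    RecursiveIn O ((fun m => Encodable.encode (history O m) : ℕ → ℕ) : ℕ →. ℕ) := by
  have hstep : RecursiveIn O
      ((fun n => Nat.succ (Nat.pair (O n.unpair.2.unpair.1) n.unpair.2.unpair.2) : ℕ → ℕ) :
        ℕ →. ℕ) := by
    refine RecursiveIn.comp_total (f := Nat.succ) .succ (RecursiveIn.pair_total ?_ ?_)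
    · exact RecursiveIn.comp_total (f := O) .oracle (.of_primrec
        (Primrec.fst.comp (Primrec.unpair.comp (Primrec.snd.comp Primrec.unpair))))
    · exact .of_primrec (Primrec.snd.comp (Primrec.unpair.comp (Primrec.snd.comp Primrec.unpair)))
  have h := RecursiveIn.prec (RecursiveIn.of_primrec (O := O) (Primrec.const 0)) hstep
  have h2 : RecursiveIn O ((fun m => Nat.pair 0 m : ℕ → ℕ) : ℕ →. ℕ) :=
    .of_primrec (Primrec₂.natPair.comp (Primrec.const 0) Primrec.id)
  refine (RecursiveIn.comp h h2).of_eq fun m => ?_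
  simp only [Nat.unpaired, PFun.coe_val, Part.bind_eq_bind, Part.bind_some, Nat.unpair_pair]
  induction m with
  | zero => simp [history]
  | succ m ih =>
    simpa [history] using
      congrArg (fun p : Part ℕ => p.bind fun i => Part.some (Nat.pair (O m) i + 1)) ih

/-- A set is Turing reducible to `X` if membership of `n` is decided primitive recursively from
an initial segment of `X` of primitive recursive length. -/
theorem turingLE_of_prefix {X Y : Set ℕ} {b : ℕ → ℕ} (hb : Primrec b) {F : ℕ → List ℕ → Prop}
    (hF : PrimrecRel F) (h : ∀ n, n ∈ Y ↔ F n ((List.range (b n)).map (charFn X))) :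
    TuringLE Y X := by
  classical
  let G : ℕ → ℕ := fun p =>
    if F p.unpair.1 (Denumerable.ofNat (List ℕ) p.unpair.2).reverse then 1 else 0
  have hG : Primrec G := by
    refine Primrec.ite (hF.comp (Primrec.fst.comp Primrec.unpair) (Primrec.list_reverse.comp
      ((Primrec.ofNat (List ℕ)).comp (Primrec.snd.comp Primrec.unpair))))
      (Primrec.const 1) (Primrec.const 0)
  have h1 := (RecursiveIn.of_primrec (O := charFn X) hG).comp_total
    ((RecursiveIn.of_primrec Primrec.id).pair_total
      ((recursiveIn_history (charFn X)).comp_total (RecursiveIn.of_primrec hb)))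
  unfold TuringLE
  convert h1 using 2
  funext n
  simp [G, charFn, h n, history_reverse]

/-- A set is Turing reducible to `X` if membership is decided primitive recursively from the
answer to a single query to `X`. -/
theorem turingLE_of_query {X Y : Set ℕ} {g : ℕ → ℕ} (hg : Primrec g) {F : ℕ → ℕ → Prop}
    (hF : PrimrecRel F) (h : ∀ n, n ∈ Y ↔ F n (charFn X (g n))) :
    TuringLE Y X := by
  refine turingLE_of_prefix (b := fun n => g n + 1) (Primrec.succ.comp hg)
    (F := fun n l => F n (l.getD (g n) 0)) ?_ ?_
  · exact hF.comp Primrec.fst ((Primrec.list_getD 0).comp Primrec.snd (hg.comp Primrec.fst))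
  · intro n
    rw [h n]
    simp [List.getD]

theorem turingLE_preimage {X : Set ℕ} {g : ℕ → ℕ} (hg : Primrec g) :
    TuringLE (g ⁻¹' X) X :=
  turingLE_of_query hg (F := fun _ c => c = 1)
    (Primrec.eq.comp Primrec.snd (Primrec.const 1)) fun n => by simp [charFn]

theorem two_mul_mem_turingJoin {X Y : Set ℕ} {n : ℕ} : 2 * n ∈ turingJoin X Y ↔ n ∈ X := by
  unfold turingJoin
  constructor
  · rintro (⟨m, hm, h⟩ | ⟨m, hm, h⟩)
    · rwa [show n = m by omega]
    · omega
  · exact fun h => .inl ⟨n, h, rfl⟩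

theorem two_mul_add_one_mem_turingJoin {X Y : Set ℕ} {n : ℕ} :
    2 * n + 1 ∈ turingJoin X Y ↔ n ∈ Y := by
  unfold turingJoin
  constructor
  · rintro (⟨m, hm, h⟩ | ⟨m, hm, h⟩)
    · omega
    · rwa [show n = m by omega]
  · exact fun h => .inr ⟨n, h, rfl⟩

theorem TuringIdeal.union_mem {S : Set (Set ℕ)} (hS : TuringIdeal S) {X Y : Set ℕ} (hX : X ∈ S)
    (hY : Y ∈ S) : X ∪ Y ∈ S := by
  refine hS.2 _ (hS.1 X hX Y hY) _ ?_
  refine turingLE_of_prefix (b := fun n => 2 * n + 2)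
    (Primrec.succ.comp Primrec.nat_double_succ)
    (F := fun n l => l.getD (2 * n) 0 = 1 ∨ l.getD (2 * n + 1) 0 = 1) ?_ ?_
  · exact PrimrecPred.or
      (Primrec.eq.comp ((Primrec.list_getD 0).comp Primrec.snd
        (Primrec.nat_double.comp Primrec.fst)) (Primrec.const 1))
      (Primrec.eq.comp ((Primrec.list_getD 0).comp Primrec.snd
        (Primrec.nat_double_succ.comp Primrec.fst)) (Primrec.const 1))
  · intro n
    simp [List.getD, charFn, two_mul_mem_turingJoin, two_mul_add_one_mem_turingJoin]

/-! ### Satisfying a primitive recursive family of clauses inside a Scott set -/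

/-- A literal `(p, b)` holds under the truth assignment `v` if `v p = b`. -/
def Satisfies (v : ℕ → Bool) (c : List (ℕ × Bool)) : Prop := ∃ l ∈ c, v l.1 = l.2

/-- The set `Z` of numbers `2 * p + b` read as a set of unit constraints `v p = b`. -/
def MeetsUnit (v : ℕ → Bool) (Z : Set ℕ) (p : ℕ) : Prop :=
  (2 * p ∈ Z → v p = false) ∧ (2 * p + 1 ∈ Z → v p = true)

/-- The binary string with code `m`. -/
def strOf (m : ℕ) : List Bool := (Encodable.decode m : Option (List Bool)).getD []

theorem strOf_encode (s : List Bool) : strOf (Encodable.encode s) = s := by simp [strOf]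

theorem primrec_strOf : Primrec strOf :=
  Primrec.option_getD.comp Primrec.decode (Primrec.const [])

/-- The strings of length `n` that falsify neither one of the first `n` clauses nor a unit
constraint. -/
def clauseTree (cl : ℕ → List (ℕ × Bool)) (Z : Set ℕ) : Set ℕ :=
  {m | ∀ n < (strOf m).length,
    (∃ l ∈ cl n, (strOf m)[l.1]? ≠ some (!l.2)) ∧
    (2 * n ∈ Z → (strOf m)[n]? ≠ some true) ∧
    (2 * n + 1 ∈ Z → (strOf m)[n]? ≠ some false)}

theorem clauseTree_turingLE {cl : ℕ → List (ℕ × Bool)} (hcl : Primrec cl) (Z : Set ℕ) :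
    TuringLE (clauseTree cl Z) Z := by
  refine turingLE_of_prefix (b := fun m => 2 * (strOf m).length)
    (Primrec.nat_double.comp (Primrec.list_length.comp primrec_strOf))
    (F := fun m h => ∀ n < (strOf m).length,
      (∃ l ∈ cl n, (strOf m)[l.1]? ≠ some (!l.2)) ∧
      (¬ h.getD (2 * n) 0 = 1 ∨ ¬ (strOf m)[n]? = some true) ∧
      (¬ h.getD (2 * n + 1) 0 = 1 ∨ ¬ (strOf m)[n]? = some false)) ?_ ?_
  · have hlit : PrimrecRel fun (l : ℕ × Bool) (s : List Bool) => s[l.1]? ≠ some (!l.2) :=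
      PrimrecPred.not (Primrec.eq.comp
        (Primrec.list_getElem?.comp Primrec.snd (Primrec.fst.comp Primrec.fst))
        (Primrec.option_some.comp (Primrec.not.comp (Primrec.snd.comp Primrec.fst))))
    have h1 : PrimrecRel fun (n : ℕ) (q : ℕ × List ℕ) =>
        (∃ l ∈ cl n, (strOf q.1)[l.1]? ≠ some (!l.2)) ∧
        (¬ q.2.getD (2 * n) 0 = 1 ∨ ¬ (strOf q.1)[n]? = some true) ∧
        (¬ q.2.getD (2 * n + 1) 0 = 1 ∨ ¬ (strOf q.1)[n]? = some false) := by
      have hs : Primrec fun x : ℕ × ℕ × List ℕ => (strOf x.2.1)[x.1]? :=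
        Primrec.list_getElem?.comp (primrec_strOf.comp (Primrec.fst.comp Primrec.snd)) Primrec.fst
      have hz : Primrec fun x : ℕ × ℕ × List ℕ => x.2.2 := Primrec.snd.comp Primrec.snd
      refine PrimrecPred.and (hlit.exists_mem_list.comp (hcl.comp Primrec.fst)
        (primrec_strOf.comp (Primrec.fst.comp Primrec.snd))) (PrimrecPred.and
        (PrimrecPred.or (PrimrecPred.not ?_) (PrimrecPred.not ?_))
        (PrimrecPred.or (PrimrecPred.not ?_) (PrimrecPred.not ?_)))
      · exact Primrec.eq.comp ((Primrec.list_getD 0).comp hz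
          (Primrec.nat_double.comp Primrec.fst)) (Primrec.const 1)
      · exact Primrec.eq.comp hs (Primrec.const _)
      · exact Primrec.eq.comp ((Primrec.list_getD 0).comp hz
          (Primrec.nat_double_succ.comp Primrec.fst)) (Primrec.const 1)
      · exact Primrec.eq.comp hs (Primrec.const _)
    exact (h1.forall_mem_list.comp (Primrec.list_range.comp
      (Primrec.list_length.comp (primrec_strOf.comp Primrec.fst)))
      (Primrec.pair Primrec.fst Primrec.snd)).of_eq fun x => by simp
  · intro m
    refine forall₂_congr fun n hn => and_congr Iff.rfl ?_
    have e1 : ((List.range (2 * (strOf m).length)).map (charFn Z)).getD (2 * n) 0 = 1 ↔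
        2 * n ∈ Z := by
      have : 2 * n < 2 * (strOf m).length := by omega
      simp [List.getD, charFn, hn]
    have e2 : ((List.range (2 * (strOf m).length)).map (charFn Z)).getD (2 * n + 1) 0 = 1 ↔
        2 * n + 1 ∈ Z := by
      have : 2 * n + 1 < 2 * (strOf m).length := by omega
      simp [List.getD, charFn, this]
    rw [e1, e2]
    tauto

theorem clauseTree_isBinTreeSet (cl : ℕ → List (ℕ × Bool)) (Z : Set ℕ) :
    IsBinTreeSet (clauseTree cl Z) := by
  intro s hs t hts n hn
  simp only [clauseTree, Set.mem_ofPred_eq, strOf_encode] at hs hn ⊢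
  have key : ∀ (p : ℕ) (b : Bool), s[p]? ≠ some b → t[p]? ≠ some b := by
    intro p b h h'
    obtain ⟨r, rfl⟩ := hts
    apply h
    obtain ⟨hp, rfl⟩ := List.getElem?_eq_some_iff.1 h'
    rw [List.getElem?_append_left hp, h']
  obtain ⟨⟨l, hl, h1⟩, h2, h3⟩ := hs n (hn.trans_le hts.length_le)
  exact ⟨⟨l, hl, key _ _ h1⟩, fun h => key _ _ (h2 h), fun h => key _ _ (h3 h)⟩

/-- Compactness inside a Scott set: a finitely satisfiable family of primitive recursive clauses
and unit constraints from `S` has a satisfying assignment in `S`. -/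
theorem ScottSet.exists_assignment {S : Set (Set ℕ)} (hS : ScottSet S)
    {cl : ℕ → List (ℕ × Bool)} (hcl : Primrec cl) {Z : Set ℕ} (hZ : Z ∈ S)
    (hfin : ∀ N, ∃ v : ℕ → Bool, ∀ n < N, Satisfies v (cl n) ∧ MeetsUnit v Z n) :
    ∃ P ∈ S, ∀ n, Satisfies (chi P) (cl n) ∧ MeetsUnit (chi P) Z n := by
  obtain ⟨P, hP, hpath⟩ := hS.2.2 (clauseTree cl Z) (hS.2.1.2 Z hZ _ (clauseTree_turingLE hcl Z))
    (clauseTree_isBinTreeSet cl Z) (by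
      choose v hv using hfin
      refine Set.infinite_of_injective_forall_mem
        (f := fun N => List.ofFn fun i : Fin N => v N i) ?_ ?_
      · intro a b hab
        simpa using congrArg List.length hab
      · intro N n hn
        simp only [strOf_encode, List.length_ofFn] at hn ⊢
        have key : ∀ p b, v N p = b → (List.ofFn fun i : Fin N => v N i)[p]? ≠ some (!b) := by
          intro p b h h'
          obtain ⟨hp, h''⟩ := List.getElem?_eq_some_iff.1 h'
          simp [h] at h''
        obtain ⟨⟨l, hl, h1⟩, h2, h3⟩ := hv N n hn
        exact ⟨⟨l, hl, key _ _ h1⟩, fun h => key n false (h2 h), fun h => key n true (h3 h)⟩)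
  refine ⟨P, hP, fun n => ?_⟩
  have hp : ∀ m, Encodable.encode (List.ofFn fun i : Fin m => chi P i) ∈ clauseTree cl Z :=
    hpath (chi P) (by simp [chi])
  have key : ∀ m p b, p < m → (List.ofFn fun i : Fin m => chi P i)[p]? ≠ some (!b) →
      chi P p = b := by
    intro m p b hpm h
    by_contra hne
    apply h
    rw [List.getElem?_eq_getElem (by simpa using hpm)]
    revert hne
    cases b <;> simp
  obtain ⟨m, hm⟩ : ∃ m, n < m ∧ ∀ l ∈ cl n, l.1 < m := by
    refine ⟨n + 1 + ((cl n).map Prod.fst).sum, by omega, fun l hl => ?_⟩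
    have := List.single_le_sum (l := (cl n).map Prod.fst) (fun _ _ => Nat.zero_le _) l.1
      (List.mem_map_of_mem hl)
    omega
  have h := hp m n
  simp only [strOf_encode, List.length_ofFn] at h
  obtain ⟨⟨l, hl, h1⟩, h2, h3⟩ := h hm.1
  exact ⟨⟨l, hl, key m _ _ (hm.2 l hl) h1⟩, fun h => key m n false hm.1 (h2 h),
    fun h => key m n true hm.1 (h3 h)⟩

end Arith

namespace Arith

/-! ### Relational formulas -/

/-- First-order formulas over ternary relation symbols `r`, with de Bruijn variables. -/
inductive Fml
  | atom (r i j l : ℕ)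
  | nand (a b : Fml)
  | all (a : Fml)

/-- Prepend a value to an environment. -/
def econs {D : Type*} (x : D) (e : ℕ → D) : ℕ → D
  | 0 => x
  | n + 1 => e n

@[simp] theorem econs_zero {D : Type*} (x : D) (e : ℕ → D) : econs x e 0 = x := rfl

@[simp] theorem econs_succ {D : Type*} (x : D) (e : ℕ → D) (n : ℕ) :
    econs x e (n + 1) = e n := rfl

namespace Fml

/-- Satisfaction of a formula. -/
def sat {D : Type*} (R : ℕ → D → D → D → Prop) : Fml → (ℕ → D) → Prop
  | atom r i j l, e => R r (e i) (e j) (e l)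
  | nand a b, e => ¬ (sat R a e ∧ sat R b e)
  | all a, e => ∀ x, sat R a (econs x e)

def neg (a : Fml) : Fml := nand a a

def and (a b : Fml) : Fml := neg (nand a b)

def or (a b : Fml) : Fml := nand (neg a) (neg b)

def imp (a b : Fml) : Fml := nand a (neg b)

def ex (a : Fml) : Fml := neg (all (neg a))

section

variable {D : Type*} (R : ℕ → D → D → D → Prop) (a b : Fml) (e : ℕ → D)

theorem sat_atom (r i j l : ℕ) : (atom r i j l).sat R e ↔ R r (e i) (e j) (e l) := Iff.rfl

theorem sat_nand : (nand a b).sat R e ↔ ¬ (a.sat R e ∧ b.sat R e) := Iff.rfl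

theorem sat_all : (all a).sat R e ↔ ∀ x, a.sat R (econs x e) := Iff.rfl

theorem sat_neg : (neg a).sat R e ↔ ¬ a.sat R e := by simp [neg, sat]

theorem sat_and : (and a b).sat R e ↔ a.sat R e ∧ b.sat R e := by
  simp [and, sat_neg, sat_nand]

theorem sat_or : (or a b).sat R e ↔ a.sat R e ∨ b.sat R e := by
  simp [or, sat_neg, sat_nand]; tauto

theorem sat_imp : (imp a b).sat R e ↔ (a.sat R e → b.sat R e) := by
  simp [imp, sat_neg, sat_nand]

theorem sat_ex : (ex a).sat R e ↔ ∃ x, a.sat R (econs x e) := by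
  simp [ex, sat_neg, sat_all]

end

/-- A bound on the free variables. -/
def bd : Fml → ℕ
  | atom _ i j l => max i (max j l) + 1
  | nand a b => max a.bd b.bd
  | all a => a.bd

theorem sat_congr {D : Type*} (R : ℕ → D → D → D → Prop) (a : Fml) {e e' : ℕ → D}
    (h : ∀ i < a.bd, e i = e' i) : a.sat R e ↔ a.sat R e' := by
  induction a generalizing e e' with
  | atom r i j l =>
    simp only [bd] at h
    rw [sat_atom, sat_atom, h i (by omega), h j (by omega), h l (by omega)]
  | nand a b iha ihb =>
    simp only [bd, lt_max_iff] at h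
    rw [sat_nand, sat_nand, iha fun i hi => h i (.inl hi), ihb fun i hi => h i (.inr hi)]
  | all a ih =>
    refine forall_congr' fun x => ih fun i hi => ?_
    cases i with
    | zero => rfl
    | succ i => exact h i (by simp only [bd]; omega)

/-- Lift a renaming of variables under a binder. -/
def lift (ρ : ℕ → ℕ) : ℕ → ℕ
  | 0 => 0
  | n + 1 => ρ n + 1

/-- Rename the free variables. -/
def rename : (ℕ → ℕ) → Fml → Fml
  | ρ, atom r i j l => atom r (ρ i) (ρ j) (ρ l)
  | ρ, nand a b => nand (rename ρ a) (rename ρ b)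
  | ρ, all a => all (rename (lift ρ) a)

theorem sat_rename {D : Type*} (R : ℕ → D → D → D → Prop) (a : Fml) (ρ : ℕ → ℕ) (e : ℕ → D) :
    (a.rename ρ).sat R e ↔ a.sat R (fun i => e (ρ i)) := by
  induction a generalizing ρ e with
  | atom r i j l => rfl
  | nand a b iha ihb => rw [rename, sat_nand, sat_nand, iha, ihb]
  | all a ih =>
    refine forall_congr' fun x => (ih _ _).trans (iff_of_eq (congrArg _ ?_))
    funext i
    cases i <;> rfl

/-- The least number principle for a formula in its variable `0`. -/
def lnp (a : Fml) : Fml :=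
  imp (ex (neg a)) (ex (and (neg a) (all (imp (atom 1 0 1 1) (a.rename (lift (· + 1)))))))

theorem sat_lnp {D : Type*} (R : ℕ → D → D → D → Prop) (a : Fml) (e : ℕ → D) :
    a.lnp.sat R e ↔ ((∃ x, ¬ a.sat R (econs x e)) →
      ∃ x, ¬ a.sat R (econs x e) ∧ ∀ y, R 1 y x x → a.sat R (econs y e)) := by
  have h : ∀ x y : D, (fun i => econs y (econs x e) (lift (· + 1) i)) = econs y e := by
    intro x y
    funext i
    cases i <;> rfl
  simp only [lnp, sat_imp, sat_ex, sat_neg, sat_and, sat_all, sat_atom, sat_rename, h]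
  rfl

/-- Code of an atomic formula. -/
def cAtom (r i j l : ℕ) : ℕ := 3 * Nat.pair r (Nat.pair i (Nat.pair j l))

def cNand (a b : ℕ) : ℕ := 3 * Nat.pair a b + 1

def cAll (a : ℕ) : ℕ := 3 * a + 2

/-- The code of a formula. -/
def code : Fml → ℕ
  | atom r i j l => cAtom r i j l
  | nand a b => cNand a.code b.code
  | all a => cAll a.code

theorem exists_code (n : ℕ) : ∃ a : Fml, a.code = n := by
  induction n using Nat.strong_induction_on with
  | _ n ih =>
    have h := Nat.mod_add_div n 3
    have h3 : n % 3 = 0 ∨ n % 3 = 1 ∨ n % 3 = 2 := by omega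
    rcases h3 with h0 | h0 | h0
    · refine ⟨atom (n / 3).unpair.1 (n / 3).unpair.2.unpair.1
        (n / 3).unpair.2.unpair.2.unpair.1 (n / 3).unpair.2.unpair.2.unpair.2, ?_⟩
      simp only [code, cAtom, Nat.pair_unpair]
      omega
    · obtain ⟨a, ha⟩ := ih (n / 3).unpair.1 ((Nat.unpair_left_le _).trans_lt (by omega))
      obtain ⟨b, hb⟩ := ih (n / 3).unpair.2 ((Nat.unpair_right_le _).trans_lt (by omega))
      refine ⟨nand a b, ?_⟩
      simp only [code, cNand, ha, hb, Nat.pair_unpair]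
      omega
    · obtain ⟨a, ha⟩ := ih (n / 3) (by omega)
      refine ⟨all a, ?_⟩
      simp only [code, cAll, ha]
      omega

theorem code_injective : Function.Injective code := by
  intro a
  induction a with
  | atom r i j l =>
    intro b h
    cases b with
    | atom r' i' j' l' =>
      simp only [code, cAtom] at h
      have h := Nat.mul_left_cancel (by omega) h
      simp only [Nat.pair_eq_pair] at h
      obtain ⟨rfl, rfl, rfl, rfl⟩ := h
      rfl
    | nand a b => simp only [code, cAtom, cNand] at h; omega
    | all a => simp only [code, cAtom, cAll] at h; omega
  | nand a₁ a₂ ih₁ ih₂ =>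
    intro b h
    cases b with
    | atom r' i' j' l' => simp only [code, cAtom, cNand] at h; omega
    | nand b₁ b₂ =>
      have h : Nat.pair a₁.code a₂.code = Nat.pair b₁.code b₂.code := by
        simp only [code, cNand] at h; omega
      rw [Nat.pair_eq_pair] at h
      rw [ih₁ h.1, ih₂ h.2]
    | all b => simp only [code, cNand, cAll] at h; omega
  | all a ih =>
    intro b h
    cases b with
    | atom r' i' j' l' => simp only [code, cAtom, cAll] at h; omega
    | nand b₁ b₂ => simp only [code, cNand, cAll] at h; omega
    | all b => rw [ih (show a.code = b.code by simp only [code, cAll] at h; omega)]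

/-- The formula with a given code. -/
noncomputable def ofCode (n : ℕ) : Fml := (exists_code n).choose

@[simp] theorem code_ofCode (n : ℕ) : (ofCode n).code = n := (exists_code n).choose_spec

@[simp] theorem ofCode_code (a : Fml) : ofCode a.code = a := code_injective (by simp)

theorem ofCode_cAtom (r i j l : ℕ) : ofCode (cAtom r i j l) = atom r i j l :=
  ofCode_code (atom r i j l)

theorem ofCode_cNand (a b : ℕ) : ofCode (cNand a b) = nand (ofCode a) (ofCode b) :=
  code_injective (by simp [code])

theorem ofCode_cAll (a : ℕ) : ofCode (cAll a) = all (ofCode a) :=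
  code_injective (by simp [code])

end Fml

/-! ### Relational presentation of arithmetic -/

section Rel

variable {D : Type*} (R : ℕ → D → D → D → Prop)

def rEq (x y : D) : Prop := R 0 x y y

def rLt (x y : D) : Prop := R 1 x y y

def rAdd (x y z : D) : Prop := R 2 x y z

def rMul (x y z : D) : Prop := R 3 x y z

def rZero (x : D) : Prop := R 4 x x x

def rOne (x : D) : Prop := R 5 x x x

/-- `x = y + y`. -/
def rDouble (x y : D) : Prop := rAdd R y y x

/-- `x = y + y + 1`. -/
def rDoubleSucc (x y : D) : Prop := ∃ w o, rOne R o ∧ rAdd R y y w ∧ rAdd R w o x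

/-- Equality is a congruence and the operations are total and functional. -/
def IsPrestructure : Prop :=
  (∀ x, rEq R x x) ∧
  (∀ x y, rEq R x y → rEq R y x) ∧
  (∀ x y z, rEq R x y → rEq R y z → rEq R x z) ∧
  (∀ x x', rEq R x x' → ∀ y y', rEq R y y' → rLt R x y → rLt R x' y') ∧
  (∀ x x', rEq R x x' → ∀ y y', rEq R y y' → ∀ z z', rEq R z z' → rAdd R x y z → rAdd R x' y' z') ∧
  (∀ x x', rEq R x x' → ∀ y y', rEq R y y' → ∀ z z', rEq R z z' → rMul R x y z → rMul R x' y' z') ∧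
  (∀ x x', rEq R x x' → rZero R x → rZero R x') ∧
  (∀ x x', rEq R x x' → rOne R x → rOne R x') ∧
  (∀ x y, ∃ z, rAdd R x y z) ∧
  (∀ x y z z', rAdd R x y z → rAdd R x y z' → rEq R z z') ∧
  (∀ x y, ∃ z, rMul R x y z) ∧
  (∀ x y z z', rMul R x y z → rMul R x y z' → rEq R z z') ∧
  (∃ x, rZero R x) ∧
  (∀ x x', rZero R x → rZero R x' → rEq R x x') ∧
  (∃ x, rOne R x) ∧
  (∀ x x', rOne R x → rOne R x' → rEq R x x')

/-- The basic axioms of arithmetic in relational form. -/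
def IsBasicArith : Prop :=
  (∀ x z, rZero R z → rAdd R x z x) ∧
  (∀ o x y y' w w', rOne R o → rAdd R y o y' → rAdd R x y w → rAdd R w o w' → rAdd R x y' w') ∧
  (∀ x z, rZero R z → rMul R x z z) ∧
  (∀ o x y y' w w', rOne R o → rAdd R y o y' → rMul R x y w → rAdd R w x w' → rMul R x y' w') ∧
  (∀ x z, rZero R z → ¬ rLt R x z) ∧
  (∀ o x y y', rOne R o → rAdd R y o y' → (rLt R x y' → rLt R x y ∨ rEq R x y)) ∧
  (∀ o x y y', rOne R o → rAdd R y o y' → (rLt R x y ∨ rEq R x y → rLt R x y')) ∧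
  (∀ o x x', rOne R o → rAdd R x o x' → ¬ rZero R x') ∧
  (∀ o x y w, rOne R o → rAdd R x o w → rAdd R y o w → rEq R x y)

/-- Existence of predecessors, halves and doubles. -/
def HasHalves : Prop :=
  (∀ x, rZero R x ∨ ∃ y o, rOne R o ∧ rAdd R y o x ∧ rLt R y x) ∧
  (∃ x, ¬ rZero R x) ∧
  (∀ y, ¬ rZero R y → ∃ x, ¬ rZero R x ∧ rDouble R x y) ∧
  (∀ y, ¬ rZero R y → ∃ x, ¬ rZero R x ∧ rDoubleSucc R x y) ∧
  (∀ x, ∃ y, rDouble R x y ∨ rDoubleSucc R x y)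

end Rel

namespace Fml

def fEq (i j : ℕ) : Fml := atom 0 i j j

def fLt (i j : ℕ) : Fml := atom 1 i j j

def fAdd (i j l : ℕ) : Fml := atom 2 i j l

def fMul (i j l : ℕ) : Fml := atom 3 i j l

def fZero (i : ℕ) : Fml := atom 4 i i i

def fOne (i : ℕ) : Fml := atom 5 i i i

def fDouble (i j : ℕ) : Fml := fAdd j j i

def fDoubleSucc (i j : ℕ) : Fml :=
  ex (ex (and (fOne 0) (and (fAdd (j + 2) (j + 2) 1) (fAdd 1 0 (i + 2)))))

section

variable {D : Type*} (R : ℕ → D → D → D → Prop) (e : ℕ → D) (i j l : ℕ)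

theorem sat_fEq : (fEq i j).sat R e ↔ rEq R (e i) (e j) := Iff.rfl

theorem sat_fLt : (fLt i j).sat R e ↔ rLt R (e i) (e j) := Iff.rfl

theorem sat_fAdd : (fAdd i j l).sat R e ↔ rAdd R (e i) (e j) (e l) := Iff.rfl

theorem sat_fMul : (fMul i j l).sat R e ↔ rMul R (e i) (e j) (e l) := Iff.rfl

theorem sat_fZero : (fZero i).sat R e ↔ rZero R (e i) := Iff.rfl

theorem sat_fOne : (fOne i).sat R e ↔ rOne R (e i) := Iff.rfl

theorem sat_fDouble : (fDouble i j).sat R e ↔ rDouble R (e i) (e j) := Iff.rfl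

theorem sat_fDoubleSucc : (fDoubleSucc i j).sat R e ↔ rDoubleSucc R (e i) (e j) := by
  simp only [fDoubleSucc, sat_ex, sat_and, sat_fOne, sat_fAdd]
  rfl

end

/-- Iterated universal quantification. -/
def alls : ℕ → Fml → Fml
  | 0, a => a
  | n + 1, a => all (alls n a)

/-- The formula expressing `IsPrestructure`. -/
def axPre : Fml :=
  and (alls 1 (fEq 0 0)) <|
  and (alls 2 (imp (fEq 1 0) (fEq 0 1))) <|
  and (alls 3 (imp (fEq 2 1) (imp (fEq 1 0) (fEq 2 0)))) <|
  and (alls 2 (imp (fEq 1 0) (alls 2 (imp (fEq 1 0) (imp (fLt 3 1) (fLt 2 0)))))) <|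
  and (alls 2 (imp (fEq 1 0) (alls 2 (imp (fEq 1 0) (alls 2 (imp (fEq 1 0)
    (imp (fAdd 5 3 1) (fAdd 4 2 0)))))))) <|
  and (alls 2 (imp (fEq 1 0) (alls 2 (imp (fEq 1 0) (alls 2 (imp (fEq 1 0)
    (imp (fMul 5 3 1) (fMul 4 2 0)))))))) <|
  and (alls 2 (imp (fEq 1 0) (imp (fZero 1) (fZero 0)))) <|
  and (alls 2 (imp (fEq 1 0) (imp (fOne 1) (fOne 0)))) <|
  and (alls 2 (ex (fAdd 2 1 0))) <|
  and (alls 4 (imp (fAdd 3 2 1) (imp (fAdd 3 2 0) (fEq 1 0)))) <|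
  and (alls 2 (ex (fMul 2 1 0))) <|
  and (alls 4 (imp (fMul 3 2 1) (imp (fMul 3 2 0) (fEq 1 0)))) <|
  and (ex (fZero 0)) <|
  and (alls 2 (imp (fZero 1) (imp (fZero 0) (fEq 1 0)))) <|
  and (ex (fOne 0)) <|
  alls 2 (imp (fOne 1) (imp (fOne 0) (fEq 1 0)))

/-- The formula expressing `IsBasicArith`. -/
def axBasic : Fml :=
  and (alls 2 (imp (fZero 0) (fAdd 1 0 1))) <|
  and (alls 6 (imp (fOne 5) (imp (fAdd 3 5 2) (imp (fAdd 4 3 1) (imp (fAdd 1 5 0)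
    (fAdd 4 2 0)))))) <|
  and (alls 2 (imp (fZero 0) (fMul 1 0 0))) <|
  and (alls 6 (imp (fOne 5) (imp (fAdd 3 5 2) (imp (fMul 4 3 1) (imp (fAdd 1 4 0)
    (fMul 4 2 0)))))) <|
  and (alls 2 (imp (fZero 0) (neg (fLt 1 0)))) <|
  and (alls 4 (imp (fOne 3) (imp (fAdd 1 3 0) (imp (fLt 2 0) (or (fLt 2 1) (fEq 2 1)))))) <|
  and (alls 4 (imp (fOne 3) (imp (fAdd 1 3 0) (imp (or (fLt 2 1) (fEq 2 1)) (fLt 2 0))))) <|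
  and (alls 3 (imp (fOne 2) (imp (fAdd 1 2 0) (neg (fZero 0))))) <|
  alls 4 (imp (fOne 3) (imp (fAdd 2 3 0) (imp (fAdd 1 3 0) (fEq 2 1))))

/-- The formula expressing `HasHalves`. -/
def axHalf : Fml :=
  and (alls 1 (or (fZero 0) (ex (ex (and (fOne 0) (and (fAdd 1 0 2) (fLt 1 2))))))) <|
  and (ex (neg (fZero 0))) <|
  and (alls 1 (imp (neg (fZero 0)) (ex (and (neg (fZero 0)) (fDouble 0 1))))) <|
  and (alls 1 (imp (neg (fZero 0)) (ex (and (neg (fZero 0)) (fDoubleSucc 0 1))))) <|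
  alls 1 (ex (or (fDouble 1 0) (fDoubleSucc 1 0)))

/-- The conjunction of all axioms. -/
def ax : Fml := and axPre (and axBasic axHalf)

variable {D : Type*} (R : ℕ → D → D → D → Prop) (e : ℕ → D)

theorem sat_axPre : axPre.sat R e ↔ IsPrestructure R := by
  simp only [axPre, alls, sat_and, sat_all, sat_imp, sat_ex, sat_fEq, sat_fLt, sat_fAdd, sat_fMul,
    sat_fZero, sat_fOne]
  exact Iff.rfl

theorem sat_axBasic : axBasic.sat R e ↔ IsBasicArith R := by
  simp only [axBasic, alls, sat_and, sat_all, sat_imp, sat_or, sat_neg, sat_fEq, sat_fLt,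
    sat_fAdd, sat_fMul, sat_fZero, sat_fOne]
  exact Iff.rfl

theorem sat_axHalf : axHalf.sat R e ↔ HasHalves R := by
  simp only [axHalf, alls, sat_and, sat_all, sat_imp, sat_or, sat_neg, sat_ex, sat_fLt,
    sat_fAdd, sat_fZero, sat_fOne, sat_fDouble, sat_fDoubleSucc]
  exact Iff.rfl

theorem sat_ax : ax.sat R e ↔ IsPrestructure R ∧ IsBasicArith R ∧ HasHalves R := by
  rw [ax, sat_and, sat_and, sat_axPre, sat_axBasic, sat_axHalf]

end Fml

/-- A relational presentation of a model of Peano arithmetic. -/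
structure Good {D : Type*} (R : ℕ → D → D → D → Prop) : Prop where
  pre : IsPrestructure R
  basic : IsBasicArith R
  half : HasHalves R
  lnp : ∀ (a : Fml) (e : ℕ → D), (∃ x, ¬ a.sat R (econs x e)) →
    ∃ x, ¬ a.sat R (econs x e) ∧ ∀ y, rLt R y x → a.sat R (econs y e)

/-- The standard relational presentation of arithmetic. -/
def natR : ℕ → ℕ → ℕ → ℕ → Prop
  | 0, x, y, _ => x = y
  | 1, x, y, _ => x < y
  | 2, x, y, z => x + y = z
  | 3, x, y, z => x * y = z
  | 4, x, _, _ => x = 0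
  | 5, x, _, _ => x = 1
  | _, _, _, _ => True

theorem good_natR : Good natR where
  pre := by
    simp only [IsPrestructure, rEq, rLt, rAdd, rMul, rZero, rOne, natR]
    refine ⟨?_, ?_, ?_, ?_, ?_, ?_, ?_, ?_, ?_, ?_, ?_, ?_, ?_, ?_, ?_, ?_⟩ <;> grind
  basic := by
    simp only [IsBasicArith, rEq, rLt, rAdd, rMul, rZero, rOne, natR]
    refine ⟨?_, ?_, ?_, ?_, ?_, ?_, ?_, ?_, ?_⟩ <;> grind
  half := by
    simp only [HasHalves, rDouble, rDoubleSucc, rLt, rAdd, rZero, rOne, natR]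
    refine ⟨fun x => ?_, ⟨1, one_ne_zero⟩, fun y hy => ⟨y + y, by omega, rfl⟩,
      fun y hy => ⟨y + y + 1, by omega, y + y, 1, rfl, rfl, rfl⟩, fun x => ⟨x / 2, ?_⟩⟩
    · rcases x with _ | x
      · exact .inl rfl
      · exact .inr ⟨x, 1, rfl, rfl, by omega⟩
    · rcases Nat.mod_two_eq_zero_or_one x with h | h
      · exact .inl (by omega)
      · exact .inr ⟨x / 2 + x / 2, 1, rfl, rfl, by omega⟩
  lnp := by
    classical
    intro a e h
    refine ⟨Nat.find h, Nat.find_spec h, fun y hy => ?_⟩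
    have := Nat.find_min h (show y < Nat.find h from hy)
    exact not_not.1 this

end Arith

namespace Arith

open Fml Encodable

/-! ### Henkin clauses -/

/-- The position of the statement with formula code `a` about the list `e` of elements. -/
def pos (a : ℕ) (e : List ℕ) : ℕ := Nat.pair a (encode e)

/-- The environment given by a list of elements. -/
def env (e : List ℕ) (i : ℕ) : ℕ := e.getD i 0

theorem env_cons (x : ℕ) (e : List ℕ) : env (x :: e) = econs x (env e) := by
  funext i
  cases i <;> simp [env]

/-- The code of the `i`-th new constant of stage `k`. -/
def cst (k i : ℕ) : ℕ := Nat.pair k (2 * i)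

/-- The code of the stage `k` element that is the least counterexample to the formula with
code `a` at parameters `e`. -/
def wit (k a : ℕ) (e : List ℕ) : ℕ := Nat.pair k (2 * pos a e + 1)

/-- The stage at which an element appears. -/
def rank (d : ℕ) : ℕ := d.unpair.1

@[simp] theorem rank_cst (k i : ℕ) : rank (cst k i) = k := by simp [rank, cst]

@[simp] theorem rank_wit (k a : ℕ) (e : List ℕ) : rank (wit k a e) = k := by simp [rank, wit]

/-- The clauses of stage `k` about formula codes `a`, `b`, a list `e` and an element `x`. -/
def clauseTable (k a b : ℕ) (e : List ℕ) (x : ℕ) : List (List (ℕ × Bool)) :=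
  [ [(pos (cNand a b) e, true), (pos a e, true)],
    [(pos (cNand a b) e, true), (pos b e, true)],
    [(pos (cNand a b) e, false), (pos a e, false), (pos b e, false)],
    [(pos (cAll a) e, false), (pos a (x :: e), true)],
    [(pos (cAll a) e, true), (pos a (wit k a e :: e), false)],
    [(pos a (x :: e), true), (pos (cAtom 1 0 1 2) [x, wit k a e, wit k a e], false)],
    [(pos (cAtom a b x.unpair.1 x.unpair.2) e, true),
      (pos (cAtom a 0 1 2) [env e b, env e x.unpair.1, env e x.unpair.2], false)],
    [(pos (cAtom a b x.unpair.1 x.unpair.2) e, false),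
      (pos (cAtom a 0 1 2) [env e b, env e x.unpair.1, env e x.unpair.2], true)] ]

/-- The clauses of stage `k`, indexed by a tuple `(t, a, b, e, x)`. -/
def clauseOf (k : ℕ) (q : ℕ × ℕ × ℕ × List ℕ × ℕ) : List (ℕ × Bool) :=
  (clauseTable k q.2.1 q.2.2.1 q.2.2.2.1 q.2.2.2.2).getD q.1 [(pos ax.code [], true)]

/-- The enumeration of the clauses of stage `k`. -/
def clause (k n : ℕ) : List (ℕ × Bool) := clauseOf k (Denumerable.ofNat _ n)

section Primrec

variable {α : Type*} [Primcodable α]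

theorem primrec_pos {f : α → ℕ} {g : α → List ℕ} (hf : Primrec f) (hg : Primrec g) :
    Primrec fun x => pos (f x) (g x) :=
  Primrec₂.natPair.comp hf (Primrec.encode.comp hg)

theorem primrec_env {f : α → List ℕ} {g : α → ℕ} (hf : Primrec f) (hg : Primrec g) :
    Primrec fun x => env (f x) (g x) :=
  (Primrec.list_getD 0).comp hf hg

theorem primrec_cAtom {r i j l : α → ℕ} (hr : Primrec r) (hi : Primrec i) (hj : Primrec j)
    (hl : Primrec l) : Primrec fun x => cAtom (r x) (i x) (j x) (l x) :=
  Primrec.nat_mul.comp (Primrec.const 3) (Primrec₂.natPair.comp hr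
    (Primrec₂.natPair.comp hi (Primrec₂.natPair.comp hj hl)))

theorem primrec_cNand {f g : α → ℕ} (hf : Primrec f) (hg : Primrec g) :
    Primrec fun x => cNand (f x) (g x) :=
  Primrec.succ.comp (Primrec.nat_mul.comp (Primrec.const 3) (Primrec₂.natPair.comp hf hg))

theorem primrec_cAll {f : α → ℕ} (hf : Primrec f) : Primrec fun x => cAll (f x) :=
  Primrec.succ.comp (Primrec.succ.comp (Primrec.nat_mul.comp (Primrec.const 3) hf))

theorem primrec_wit (k : ℕ) {f : α → ℕ} {g : α → List ℕ} (hf : Primrec f) (hg : Primrec g) :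
    Primrec fun x => wit k (f x) (g x) :=
  Primrec₂.natPair.comp (Primrec.const k)
    (Primrec.nat_double_succ.comp (primrec_pos hf hg))

theorem primrec_cst (k : ℕ) {f : α → ℕ} (hf : Primrec f) : Primrec fun x => cst k (f x) :=
  Primrec₂.natPair.comp (Primrec.const k) (Primrec.nat_double.comp hf)

theorem primrec_cons {β : Type*} [Primcodable β] {f : α → β} {g : α → List β} (hf : Primrec f)
    (hg : Primrec g) : Primrec fun x => f x :: g x :=
  Primrec.list_cons.comp hf hg

theorem primrec_literal {f : α → ℕ} (b : Bool) (hf : Primrec f) : Primrec fun x => (f x, b) :=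
  Primrec.pair hf (Primrec.const b)

theorem primrec_clause (k : ℕ) : Primrec (clause k) := by
  have ht : Primrec fun q : ℕ × ℕ × ℕ × List ℕ × ℕ => q.1 := Primrec.fst
  have ha : Primrec fun q : ℕ × ℕ × ℕ × List ℕ × ℕ => q.2.1 := Primrec.fst.comp Primrec.snd
  have hb : Primrec fun q : ℕ × ℕ × ℕ × List ℕ × ℕ => q.2.2.1 :=
    Primrec.fst.comp (Primrec.snd.comp Primrec.snd)
  have he : Primrec fun q : ℕ × ℕ × ℕ × List ℕ × ℕ => q.2.2.2.1 :=
    Primrec.fst.comp (Primrec.snd.comp (Primrec.snd.comp Primrec.snd))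
  have hx : Primrec fun q : ℕ × ℕ × ℕ × List ℕ × ℕ => q.2.2.2.2 :=
    Primrec.snd.comp (Primrec.snd.comp (Primrec.snd.comp Primrec.snd))
  have hx₁ := Primrec.fst.comp (Primrec.unpair.comp hx)
  have hx₂ := Primrec.snd.comp (Primrec.unpair.comp hx)
  have hw := primrec_wit k ha he
  have hat := primrec_cAtom ha hb hx₁ hx₂
  have hat' := primrec_cAtom ha (Primrec.const 0) (Primrec.const 1) (Primrec.const 2)
  have hl : Primrec fun q : ℕ × ℕ × ℕ × List ℕ × ℕ =>
      [env q.2.2.2.1 q.2.2.1, env q.2.2.2.1 q.2.2.2.2.unpair.1,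
        env q.2.2.2.1 q.2.2.2.2.unpair.2] :=
    primrec_cons (primrec_env he hb) (primrec_cons (primrec_env he hx₁)
      (primrec_cons (primrec_env he hx₂) (Primrec.const [])))
  have htab : Primrec fun q : ℕ × ℕ × ℕ × List ℕ × ℕ =>
      clauseTable k q.2.1 q.2.2.1 q.2.2.2.1 q.2.2.2.2 := by
    refine primrec_cons ?_ (primrec_cons ?_ (primrec_cons ?_ (primrec_cons ?_ (primrec_cons ?_
      (primrec_cons ?_ (primrec_cons ?_ (primrec_cons ?_ (Primrec.const []))))))))
    · exact primrec_cons (primrec_literal _ (primrec_pos (primrec_cNand ha hb) he))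
        (primrec_cons (primrec_literal _ (primrec_pos ha he)) (Primrec.const []))
    · exact primrec_cons (primrec_literal _ (primrec_pos (primrec_cNand ha hb) he))
        (primrec_cons (primrec_literal _ (primrec_pos hb he)) (Primrec.const []))
    · exact primrec_cons (primrec_literal _ (primrec_pos (primrec_cNand ha hb) he))
        (primrec_cons (primrec_literal _ (primrec_pos ha he))
          (primrec_cons (primrec_literal _ (primrec_pos hb he)) (Primrec.const [])))
    · exact primrec_cons (primrec_literal _ (primrec_pos (primrec_cAll ha) he))
        (primrec_cons (primrec_literal _ (primrec_pos ha (primrec_cons hx he)))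
          (Primrec.const []))
    · exact primrec_cons (primrec_literal _ (primrec_pos (primrec_cAll ha) he))
        (primrec_cons (primrec_literal _ (primrec_pos ha (primrec_cons hw he)))
          (Primrec.const []))
    · exact primrec_cons (primrec_literal _ (primrec_pos ha (primrec_cons hx he)))
        (primrec_cons (primrec_literal _ (primrec_pos (Primrec.const (cAtom 1 0 1 2))
          (primrec_cons hx (primrec_cons hw (primrec_cons hw (Primrec.const []))))))
          (Primrec.const []))
    · exact primrec_cons (primrec_literal _ (primrec_pos hat he))
        (primrec_cons (primrec_literal _ (primrec_pos hat' hl)) (Primrec.const []))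
    · exact primrec_cons (primrec_literal _ (primrec_pos hat he))
        (primrec_cons (primrec_literal _ (primrec_pos hat' hl)) (Primrec.const []))
  exact ((Primrec.list_getD _).comp htab ht).comp (Primrec.ofNat _)

end Primrec

/-! ### From truth predicates to structures -/

/-- The relations read off a truth predicate. -/
def relOf (T : ℕ → List ℕ → Prop) (r x y z : ℕ) : Prop := T (cAtom r 0 1 2) [x, y, z]

theorem truth_iff_sat {T : ℕ → List ℕ → Prop}
    (hnand : ∀ a b e, T (cNand a b) e ↔ ¬ (T a e ∧ T b e))
    (hall : ∀ a e, T (cAll a) e ↔ ∀ x, T a (x :: e))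
    (hatom : ∀ r i j l e, T (cAtom r i j l) e ↔ T (cAtom r 0 1 2) [env e i, env e j, env e l])
    (a : Fml) (e : List ℕ) : T a.code e ↔ a.sat (relOf T) (env e) := by
  induction a generalizing e with
  | atom r i j l => exact hatom r i j l e
  | nand a b iha ihb => rw [code, hnand, sat_nand, iha, ihb]
  | all a ih =>
    rw [code, hall, sat_all]
    exact forall_congr' fun x => by rw [ih, env_cons]

theorem exists_env (n : ℕ) (e : ℕ → ℕ) : ∃ l : List ℕ, ∀ i < n, env l i = e i :=
  ⟨(List.range n).map e, fun i hi => by simp [env, List.getD, hi]⟩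

section Assignment

variable {k : ℕ} {v : ℕ → Bool}

/-- The truth predicate given by an assignment. -/
def truth (v : ℕ → Bool) (a : ℕ) (e : List ℕ) : Prop := v (pos a e) = true

theorem satisfies_clauseOf (hv : ∀ n, Satisfies v (clause k n)) (q) :
    Satisfies v (clauseOf k q) := by
  have h := hv (encode q)
  rwa [clause, Denumerable.ofNat_encode] at h

theorem truth_nand (hv : ∀ n, Satisfies v (clause k n))
    (a b : ℕ) (e : List ℕ) :
    truth v (cNand a b) e ↔ ¬ (truth v a e ∧ truth v b e) := by
  have h0 := satisfies_clauseOf hv (0, a, b, e, 0)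
  have h1 := satisfies_clauseOf hv (1, a, b, e, 0)
  have h2 := satisfies_clauseOf hv (2, a, b, e, 0)
  simp [clauseOf, clauseTable, Satisfies] at h0 h1 h2
  unfold truth
  grind

theorem truth_wit (hv : ∀ n, Satisfies v (clause k n))
    (a : ℕ) (e : List ℕ) (h : truth v a (wit k a e :: e)) : truth v (cAll a) e := by
  have h0 := satisfies_clauseOf hv (4, a, 0, e, 0)
  simp [clauseOf, clauseTable, Satisfies] at h0
  unfold truth at h ⊢
  grind

theorem truth_of_lt_wit (hv : ∀ n, Satisfies v (clause k n))
    (a x : ℕ) (e : List ℕ) (h : rLt (relOf (truth v)) x (wit k a e)) :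
    truth v a (x :: e) := by
  have h0 := satisfies_clauseOf hv (5, a, 0, e, x)
  simp [clauseOf, clauseTable, Satisfies] at h0
  simp only [rLt, relOf, truth] at h ⊢
  grind

theorem truth_all (hv : ∀ n, Satisfies v (clause k n))
    (a : ℕ) (e : List ℕ) : truth v (cAll a) e ↔ ∀ x, truth v a (x :: e) := by
  refine ⟨fun h x => ?_, fun h => truth_wit hv a e (h _)⟩
  have h0 := satisfies_clauseOf hv (3, a, 0, e, x)
  simp [clauseOf, clauseTable, Satisfies] at h0
  unfold truth at h ⊢
  grind

theorem truth_atom (hv : ∀ n, Satisfies v (clause k n))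
    (r i j l : ℕ) (e : List ℕ) :
    truth v (cAtom r i j l) e ↔ truth v (cAtom r 0 1 2) [env e i, env e j, env e l] := by
  have h0 := satisfies_clauseOf hv (6, r, i, e, Nat.pair j l)
  have h1 := satisfies_clauseOf hv (7, r, i, e, Nat.pair j l)
  simp [clauseOf, clauseTable, Satisfies] at h0 h1
  unfold truth
  grind

theorem truth_ax (hv : ∀ n, Satisfies v (clause k n)) : truth v ax.code [] := by
  have h0 := satisfies_clauseOf hv (8, 0, 0, [], 0)
  simpa [clauseOf, clauseTable, Satisfies, truth] using h0

theorem truth_code_iff (hv : ∀ n, Satisfies v (clause k n))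
    (a : Fml) (e : List ℕ) :
    truth v a.code e ↔ a.sat (relOf (truth v)) (env e) :=
  truth_iff_sat (truth_nand hv) (truth_all hv) (truth_atom hv) a e

theorem good_relOf_truth (hv : ∀ n, Satisfies v (clause k n)) : Good (relOf (truth v)) := by
  obtain ⟨h1, h2, h3⟩ := (sat_ax _ _).1 ((truth_code_iff hv ax []).1 (truth_ax hv))
  refine ⟨h1, h2, h3, fun a e => ?_⟩
  obtain ⟨l, hl⟩ := exists_env a.bd e
  have key : ∀ x, a.sat (relOf (truth v)) (econs x e) ↔ truth v a.code (x :: l) := by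
    intro x
    rw [truth_code_iff hv, env_cons]
    refine sat_congr _ _ fun i hi => ?_
    cases i with
    | zero => rfl
    | succ i => exact (hl i (by omega)).symm
  simp only [key]
  rintro ⟨x, hx⟩
  refine ⟨wit k a.code l, fun h => hx ?_, fun y hy => truth_of_lt_wit hv _ _ _ hy⟩
  exact (truth_all hv _ _).1 (truth_wit hv _ _ h) x

end Assignment

/-! ### From structures to assignments -/

theorem getD_le_encode (e : List ℕ) (i : ℕ) : env e i ≤ encode e := by
  induction e generalizing i with
  | nil => simp [env]
  | cons x e ih =>
    rw [env_cons, encode_list_cons, encode_nat]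
    cases i with
    | zero => exact (Nat.left_le_pair _ _).trans (Nat.le_succ _)
    | succ i => exact (ih i).trans ((Nat.right_le_pair _ _).trans (Nat.le_succ _))

theorem env_lt_wit (k a : ℕ) (e : List ℕ) (i : ℕ) : env e i < wit k a e := by
  have h1 := getD_le_encode e i
  have h2 : encode e ≤ pos a e := Nat.right_le_pair _ _
  have h3 : 2 * pos a e + 1 ≤ wit k a e := Nat.right_le_pair _ _
  omega

section Eval

variable {D : Type*} [Inhabited D] (R : ℕ → D → D → D → Prop)

open Classical in
/-- A least counterexample to `a` at `e`, if there is one. -/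
noncomputable def leastCex (a : Fml) (e : ℕ → D) : D :=
  if h : ∃ x, ¬ a.sat R (econs x e) ∧ ∀ y, rLt R y x → a.sat R (econs y e) then h.choose
  else default

theorem leastCex_spec {R} (hR : Good R) {a : Fml} {e : ℕ → D} {x : D}
    (h : ¬ a.sat R (econs x e)) : ¬ a.sat R (econs (leastCex R a e) e) ∧
      ∀ y, rLt R y (leastCex R a e) → a.sat R (econs y e) := by
  have h' := hR.lnp a e ⟨x, h⟩
  rw [leastCex, dif_pos h']
  exact h'.choose_spec

/-- The interpretation of element codes: elements of stage `k` are interpreted by `q` and least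
counterexamples, all others by `h`. -/
noncomputable def evalCode (k : ℕ) (h q : ℕ → D) (d : ℕ) : D :=
  if rank d = k then
    if d.unpair.2 % 2 = 0 then q (d.unpair.2 / 2)
    else leastCex R (ofCode (d.unpair.2 / 2).unpair.1) fun i =>
      let c := env (Denumerable.ofNat (List ℕ) (d.unpair.2 / 2).unpair.2) i
      if _ : c < d then evalCode k h q c else default
  else h d
  termination_by d

variable (k : ℕ) (h q : ℕ → D)

theorem evalCode_of_rank_ne {d : ℕ} (hd : rank d ≠ k) : evalCode R k h q d = h d := by
  rw [evalCode, if_neg hd]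

theorem evalCode_cst (i : ℕ) : evalCode R k h q (cst k i) = q i := by
  rw [evalCode, if_pos (rank_cst k i)]
  simp [cst]

theorem evalCode_wit (a : ℕ) (e : List ℕ) : evalCode R k h q (wit k a e) =
    leastCex R (ofCode a) fun i => evalCode R k h q (env e i) := by
  rw [evalCode, if_pos (rank_wit k a e)]
  have h1 : (wit k a e).unpair.2 = 2 * pos a e + 1 := by simp [wit]
  have h2 : (2 * pos a e + 1) / 2 = pos a e := by omega
  have h3 : (2 * pos a e + 1) % 2 ≠ 0 := by omega
  rw [h1, if_neg h3, h2]
  simp only [pos, Nat.unpair_pair, Denumerable.ofNat_encode, env_lt_wit, dif_pos]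

open Classical in
/-- The assignment of truth values given by an interpretation of the element codes. -/
noncomputable def assign (p : ℕ) : Bool :=
  decide ((ofCode p.unpair.1).sat R fun i =>
    evalCode R k h q (env (Denumerable.ofNat (List ℕ) p.unpair.2) i))

theorem assign_pos (a : ℕ) (e : List ℕ) : assign R k h q (pos a e) = true ↔
    (ofCode a).sat R fun i => evalCode R k h q (env e i) := by
  classical
  unfold assign
  rw [decide_eq_true_iff]
  simp [pos]

theorem assign_pos_false (a : ℕ) (e : List ℕ) : assign R k h q (pos a e) = false ↔
    ¬ (ofCode a).sat R fun i => evalCode R k h q (env e i) := by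
  rw [← assign_pos, Bool.not_eq_true]

theorem evalCode_env_cons (x : ℕ) (e : List ℕ) :
    (fun i => evalCode R k h q (env (x :: e) i)) =
      econs (evalCode R k h q x) fun i => evalCode R k h q (env e i) := by
  rw [env_cons]
  funext i
  cases i <;> rfl

theorem assign_satisfies {R} (hR : Good R) (n : ℕ) :
    Satisfies (assign R k h q) (clause k n) := by
  rw [clause]
  obtain ⟨t, a, b, e, x⟩ := Denumerable.ofNat (ℕ × ℕ × ℕ × List ℕ × ℕ) n
  have hax : (ofCode ax.code).sat R fun i => evalCode R k h q (env [] i) := by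
    rw [ofCode_code, sat_ax]
    exact ⟨hR.pre, hR.basic, hR.half⟩
  have hatom : ∀ i j l,
      (ofCode (cAtom a i j l)).sat R (fun i => evalCode R k h q (env e i)) ↔
      (ofCode (cAtom a 0 1 2)).sat R
        (fun i' => evalCode R k h q (env [env e i, env e j, env e l] i')) := by
    intro i j l
    simp only [ofCode_cAtom, sat_atom]
    rfl
  match t with
  | 0 | 1 | 2 =>
    simp [clauseOf, clauseTable, Satisfies, assign_pos, assign_pos_false, ofCode_cNand, sat_nand]
    try tauto
  | 3 =>
    simp only [clauseOf, clauseTable, Satisfies, List.getD_cons_succ,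
      List.getD_cons_zero, List.mem_cons,
      List.not_mem_nil, or_false, exists_eq_or_imp, exists_eq_left, assign_pos, assign_pos_false,
      ofCode_cAll, sat_all, evalCode_env_cons]
    rw [or_iff_not_imp_left, not_not]
    exact fun h => h _
  | 4 =>
    simp only [clauseOf, clauseTable, Satisfies, List.getD_cons_succ,
      List.getD_cons_zero, List.mem_cons,
      List.not_mem_nil, or_false, exists_eq_or_imp, exists_eq_left, assign_pos, assign_pos_false,
      ofCode_cAll, sat_all, evalCode_env_cons, evalCode_wit]
    rw [or_iff_not_imp_left, not_forall]
    exact fun ⟨x, hx⟩ => (leastCex_spec hR hx).1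
  | 5 =>
    simp only [clauseOf, clauseTable, Satisfies, List.getD_cons_succ,
      List.getD_cons_zero, List.mem_cons,
      List.not_mem_nil, or_false, exists_eq_or_imp, exists_eq_left, assign_pos, assign_pos_false,
      ofCode_cAtom, sat_atom, evalCode_env_cons, evalCode_wit]
    rw [or_iff_not_imp_left]
    exact fun hx hlt => hx ((leastCex_spec hR hx).2 _ hlt)
  | 6 | 7 =>
    simp only [clauseOf, clauseTable, Satisfies, List.getD_cons_succ,
      List.getD_cons_zero, List.mem_cons,
      List.not_mem_nil, or_false, exists_eq_or_imp, exists_eq_left, assign_pos, assign_pos_false,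
      hatom]
    tauto
  | t + 8 =>
    simp only [clauseOf, clauseTable, Satisfies, List.getD_cons_succ, List.getD_nil, List.mem_cons,
      List.not_mem_nil, or_false, exists_eq_left, assign_pos]
    exact hax

end Eval

end Arith

namespace Arith

open Fml Encodable

/-! ### Adding an element coding a given set -/

/-- The sequence `q` of nonzero elements witnesses that the binary digits of `q 0` are given
by `A`. -/
def DigitSeq {D : Type*} (R : ℕ → D → D → D → Prop) (A : Set ℕ) (q : ℕ → D) (i : ℕ) : Prop :=
  ¬ rZero R (q i) ∧ (i ∉ A → rDouble R (q i) (q (i + 1))) ∧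
    (i ∈ A → rDoubleSucc R (q i) (q (i + 1)))

theorem Good.exists_digitSeq {D : Type*} {R : ℕ → D → D → D → Prop} (hR : Good R) (N : ℕ)
    (A : Set ℕ) : ∃ q : ℕ → D, ¬ rZero R (q 0) ∧ ∀ i < N, DigitSeq R A q i := by
  obtain ⟨-, ⟨z, hz⟩, hd, hs, -⟩ := hR.half
  induction N generalizing A with
  | zero => exact ⟨fun _ => z, hz, by simp⟩
  | succ N ih =>
    obtain ⟨q, hq0, hq⟩ := ih {i | i + 1 ∈ A}
    obtain ⟨x, hx, hx'⟩ : ∃ x, ¬ rZero R x ∧ (0 ∉ A → rDouble R x (q 0)) ∧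
        (0 ∈ A → rDoubleSucc R x (q 0)) := by
      by_cases h : 0 ∈ A
      · obtain ⟨x, hx, hx'⟩ := hs _ hq0
        exact ⟨x, hx, fun h' => absurd h h', fun _ => hx'⟩
      · obtain ⟨x, hx, hx'⟩ := hd _ hq0
        exact ⟨x, hx, fun _ => hx', fun h' => absurd h' h⟩
    refine ⟨econs x q, hx, fun i hi => ?_⟩
    cases i with
    | zero => exact ⟨hx, hx'⟩
    | succ i => exact hq i (by omega)

/-- The unit constraints saying that the constants of stage `k` form a digit sequence
for `A`. -/
def digitUnits (k : ℕ) (A : Set ℕ) : Set ℕ :=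
  {m | ∃ i < m + 1,
    (m = 2 * pos (fDouble 0 1).code [cst k i, cst k (i + 1)] + 1 ∧ i ∉ A) ∨
    (m = 2 * pos (fDoubleSucc 0 1).code [cst k i, cst k (i + 1)] + 1 ∧ i ∈ A) ∨
    m = 2 * pos (fZero 0).code [cst k i]}

theorem digitUnits_turingLE (k : ℕ) (A : Set ℕ) : TuringLE (digitUnits k A) A := by
  refine turingLE_of_prefix (b := fun m => m + 1) Primrec.succ
    (F := fun m l => ∃ i < m + 1,
      (m = 2 * pos (fDouble 0 1).code [cst k i, cst k (i + 1)] + 1 ∧ ¬ l.getD i 0 = 1) ∨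
      (m = 2 * pos (fDoubleSucc 0 1).code [cst k i, cst k (i + 1)] + 1 ∧ l.getD i 0 = 1) ∨
      m = 2 * pos (fZero 0).code [cst k i]) ?_ ?_
  · have hi : Primrec fun x : ℕ × ℕ × List ℕ => x.1 := Primrec.fst
    have hm : Primrec fun x : ℕ × ℕ × List ℕ => x.2.1 := Primrec.fst.comp Primrec.snd
    have hl : Primrec fun x : ℕ × ℕ × List ℕ => x.2.2.getD x.1 0 :=
      (Primrec.list_getD 0).comp (Primrec.snd.comp Primrec.snd) hi
    have hp : ∀ a : ℕ, Primrec fun x : ℕ × ℕ × List ℕ =>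
        2 * pos a [cst k x.1, cst k (x.1 + 1)] + 1 := fun a =>
      Primrec.nat_double_succ.comp (primrec_pos (Primrec.const a) (primrec_cons
        (primrec_cst k hi) (primrec_cons (primrec_cst k (Primrec.succ.comp hi))
        (Primrec.const []))))
    have hz : Primrec fun x : ℕ × ℕ × List ℕ => 2 * pos (fZero 0).code [cst k x.1] :=
      Primrec.nat_double.comp (primrec_pos (Primrec.const _) (primrec_cons
        (primrec_cst k hi) (Primrec.const [])))
    have h : PrimrecRel fun (i : ℕ) (x : ℕ × List ℕ) =>
        (x.1 = 2 * pos (fDouble 0 1).code [cst k i, cst k (i + 1)] + 1 ∧ ¬ x.2.getD i 0 = 1) ∨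
        (x.1 = 2 * pos (fDoubleSucc 0 1).code [cst k i, cst k (i + 1)] + 1 ∧
          x.2.getD i 0 = 1) ∨
        x.1 = 2 * pos (fZero 0).code [cst k i] :=
      PrimrecPred.or (PrimrecPred.and (Primrec.eq.comp hm (hp _))
        (PrimrecPred.not (Primrec.eq.comp hl (Primrec.const 1))))
        (PrimrecPred.or (PrimrecPred.and (Primrec.eq.comp hm (hp _))
          (Primrec.eq.comp hl (Primrec.const 1))) (Primrec.eq.comp hm hz))
    exact (h.exists_mem_list.comp (Primrec.list_range.comp (Primrec.succ.comp Primrec.fst))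
      (Primrec.pair Primrec.fst Primrec.snd)).of_eq fun x => by simp
  · intro m
    refine exists_congr fun i => and_congr_right fun hi => ?_
    have e : ((List.range (m + 1)).map (charFn A)).getD i 0 = 1 ↔ i ∈ A := by
      simp [List.getD, charFn, hi]
    rw [e]

theorem le_cst (k i : ℕ) : i ≤ cst k i :=
  le_trans (by omega) (Nat.right_le_pair k (2 * i))

theorem le_pos_cst (k a i : ℕ) (e : List ℕ) : i ≤ pos a (cst k i :: e) :=
  (le_cst k i).trans ((getD_le_encode (cst k i :: e) 0).trans (Nat.right_le_pair _ _))

theorem meetsUnit_union {v : ℕ → Bool} {Z Z' : Set ℕ} {p : ℕ} :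
    MeetsUnit v (Z ∪ Z') p ↔ MeetsUnit v Z p ∧ MeetsUnit v Z' p := by
  simp only [MeetsUnit, Set.mem_union]
  tauto

theorem assign_meets_digitUnits {D : Type*} [Inhabited D] {R : ℕ → D → D → D → Prop} {k N : ℕ}
    {A : Set ℕ} {h q : ℕ → D} (hq : ∀ i < N, DigitSeq R A q i) {p : ℕ} (hp : p < N) :
    MeetsUnit (assign R k h q) (digitUnits k A) p := by
  constructor
  · rintro ⟨i, -, ⟨hi, -⟩ | ⟨hi, -⟩ | hi⟩
    · omega
    · omega
    · obtain rfl : p = pos (fZero 0).code [cst k i] := by omega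
      rw [assign_pos_false, ofCode_code, sat_fZero]
      have := (hq i ((le_pos_cst _ _ _ _).trans_lt hp)).1
      simpa [env, evalCode_cst] using this
  · rintro ⟨i, -, ⟨hi, hA⟩ | ⟨hi, hA⟩ | hi⟩
    · obtain rfl : p = pos (fDouble 0 1).code [cst k i, cst k (i + 1)] := by omega
      rw [assign_pos, ofCode_code, sat_fDouble]
      have := (hq i ((le_pos_cst _ _ _ _).trans_lt hp)).2.1 hA
      simpa [env, evalCode_cst] using this
    · obtain rfl : p = pos (fDoubleSucc 0 1).code [cst k i, cst k (i + 1)] := by omega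
      rw [assign_pos, ofCode_code, sat_fDoubleSucc]
      have := (hq i ((le_pos_cst _ _ _ _).trans_lt hp)).2.2 hA
      simpa [env, evalCode_cst] using this
    · omega

theorem truth_digitSeq {k : ℕ} {v : ℕ → Bool} {A : Set ℕ}
    (h : ∀ p, MeetsUnit v (digitUnits k A) p) (i : ℕ) :
    ¬ truth v (fZero 0).code [cst k i] ∧
      (i ∉ A → truth v (fDouble 0 1).code [cst k i, cst k (i + 1)]) ∧
      (i ∈ A → truth v (fDoubleSucc 0 1).code [cst k i, cst k (i + 1)]) := by
  refine ⟨?_, fun hA => ?_, fun hA => ?_⟩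
  · have := (h (pos (fZero 0).code [cst k i])).1
      ⟨i, (le_pos_cst k (fZero 0).code i []).trans_lt (by omega), .inr (.inr rfl)⟩
    simp [truth, this]
  · exact (h (pos (fDouble 0 1).code [cst k i, cst k (i + 1)])).2
      ⟨i, (le_pos_cst k (fDouble 0 1).code i [cst k (i + 1)]).trans_lt (by omega), .inl ⟨rfl, hA⟩⟩
  · exact (h (pos (fDoubleSucc 0 1).code [cst k i, cst k (i + 1)])).2
      ⟨i, (le_pos_cst k (fDoubleSucc 0 1).code i [cst k (i + 1)]).trans_lt (by omega),
        .inr (.inl ⟨rfl, hA⟩)⟩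

/-- `P` is an assignment in `S` satisfying the clauses of stage `k` in which the constants of
stage `k` are digits of `A`. -/
def IsStage (S : Set (Set ℕ)) (A : Set ℕ) (k : ℕ) (P : Set ℕ) : Prop :=
  P ∈ S ∧ (∀ n, Satisfies (chi P) (clause k n)) ∧ ∀ p, MeetsUnit (chi P) (digitUnits k A) p

theorem ScottSet.exists_isStage {S : Set (Set ℕ)} (hS : ScottSet S) {D : Type*} [Inhabited D]
    {R : ℕ → D → D → D → Prop} (hR : Good R) (k : ℕ) (h : ℕ → D) {A Z : Set ℕ} (hA : A ∈ S)
    (hZ : Z ∈ S) (hunit : ∀ q p, MeetsUnit (assign R k h q) Z p) :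
    ∃ P, IsStage S A k P ∧ ∀ p, MeetsUnit (chi P) Z p := by
  obtain ⟨P, hP, hP'⟩ := hS.exists_assignment (primrec_clause k)
    (hS.2.1.union_mem hZ (hS.2.1.2 A hA _ (digitUnits_turingLE k A))) (fun N => by
      obtain ⟨q, -, hq⟩ := hR.exists_digitSeq N A
      exact ⟨assign R k h q, fun n hn => ⟨assign_satisfies k h q hR n,
        meetsUnit_union.2 ⟨hunit q n, assign_meets_digitUnits hq hn⟩⟩⟩)
  exact ⟨P, ⟨hP, fun n => (hP' n).1, fun p => (meetsUnit_union.1 (hP' p).2).2⟩,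
    fun p => (meetsUnit_union.1 (hP' p).2).1⟩

theorem ScottSet.empty_mem {S : Set (Set ℕ)} (hS : ScottSet S) : ∅ ∈ S := by
  obtain ⟨X, hX⟩ := hS.1
  exact hS.2.1.2 X hX _ (turingLE_of_query Primrec.id (F := fun _ _ => False)
    ((PrimrecPred.not (Primrec.eq.comp (Primrec.const 0) (Primrec.const 0))).of_eq
      fun _ => by simp) (by simp))

theorem ScottSet.exists_isStage_zero {S : Set (Set ℕ)} (hS : ScottSet S) {A : Set ℕ}
    (hA : A ∈ S) : ∃ P, IsStage S A 0 P := by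
  obtain ⟨P, hP, -⟩ := hS.exists_isStage good_natR 0 id hA hS.empty_mem
    (fun _ _ => ⟨fun h => h.elim, fun h => h.elim⟩)
  exact ⟨P, hP⟩

/-- All entries of `e` have rank at most `k`. -/
def RankLe (k : ℕ) (e : List ℕ) : Prop := ∀ d ∈ e, rank d ≤ k

theorem RankLe.mono {k k' : ℕ} {e : List ℕ} (h : RankLe k e) (hk : k ≤ k') : RankLe k' e :=
  fun d hd => (h d hd).trans hk

theorem exists_rankLe (e : List ℕ) : ∃ k, RankLe k e := by
  refine ⟨(e.map rank).sum, fun d hd => ?_⟩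
  exact List.single_le_sum (fun _ _ => Nat.zero_le _) _ (List.mem_map_of_mem hd)

theorem RankLe.rank_env {k : ℕ} {e : List ℕ} (h : RankLe k e) (i : ℕ) : rank (env e i) ≤ k := by
  by_cases hi : i < e.length
  · have : env e i = e[i] := by simp [env, hi]
    rw [this]
    exact h _ (List.getElem_mem hi)
  · have : env e i = 0 := by simp [env, List.getD, not_lt.1 hi]
    rw [this]
    simp [rank]

/-- The unit constraints preserving the truth values of `P` about elements of rank at
most `k`. -/
def oldUnits (k : ℕ) (P : Set ℕ) : Set ℕ :=
  {m | RankLe k (Denumerable.ofNat (List ℕ) (m / 2).unpair.2) ∧ (m / 2 ∈ P ↔ m % 2 = 1)}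

theorem oldUnits_turingLE (k : ℕ) (P : Set ℕ) : TuringLE (oldUnits k P) P := by
  have hdiv : Primrec fun m : ℕ => m / 2 := Primrec.nat_div.comp Primrec.id (Primrec.const 2)
  have hmod : Primrec fun m : ℕ => m % 2 := Primrec.nat_mod.comp Primrec.id (Primrec.const 2)
  refine turingLE_of_query hdiv
    (F := fun m c => RankLe k (Denumerable.ofNat (List ℕ) (m / 2).unpair.2) ∧ c = m % 2) ?_ ?_
  · have hr : PrimrecPred fun d : ℕ => rank d ≤ k :=
      Primrec.nat_le.comp (Primrec.fst.comp Primrec.unpair) (Primrec.const k)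
    exact PrimrecPred.and (hr.forall_mem_list.comp ((Primrec.ofNat _).comp (Primrec.snd.comp
      (Primrec.unpair.comp (hdiv.comp Primrec.fst)))))
      (Primrec.eq.comp Primrec.snd (hmod.comp Primrec.fst))
  · intro m
    refine and_congr Iff.rfl ?_
    have := Nat.mod_two_eq_zero_or_one m
    by_cases h : m / 2 ∈ P <;> simp [charFn, h] <;> omega

theorem ScottSet.exists_isStage_succ {S : Set (Set ℕ)} (hS : ScottSet S) {A A' P : Set ℕ} {k : ℕ}
    (hA : A ∈ S) (hP : IsStage S A' k P) : ∃ P', IsStage S A (k + 1) P' ∧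
      ∀ a e, RankLe k e → (truth (chi P) a e ↔ truth (chi P') a e) := by
  have key : ∀ q p, RankLe k (Denumerable.ofNat (List ℕ) p.unpair.2) →
      assign (relOf (truth (chi P))) (k + 1) id q p = chi P p := by
    intro q p hp
    obtain ⟨a, e, rfl⟩ : ∃ a e, p = pos a e :=
      ⟨p.unpair.1, Denumerable.ofNat (List ℕ) p.unpair.2, by simp [pos]⟩
    simp only [pos, Nat.unpair_pair, Denumerable.ofNat_encode] at hp
    rw [Bool.eq_iff_iff, assign_pos]
    have h := truth_code_iff hP.2.1 (ofCode a) e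
    rw [code_ofCode] at h
    refine Iff.trans (iff_of_eq (congrArg _ ?_)) h.symm
    funext i
    exact evalCode_of_rank_ne _ _ _ _ (by have := hp.rank_env i; omega)
  obtain ⟨P', hP', hu⟩ := hS.exists_isStage (good_relOf_truth hP.2.1) (k + 1) id hA
    (hS.2.1.2 P hP.1 _ (oldUnits_turingLE k P)) (by
      intro q p
      constructor
      · rintro ⟨h1, h2⟩
        rw [show 2 * p / 2 = p by omega] at h1 h2
        rw [key q p h1]
        have : p ∉ P := by rw [h2]; omega
        simp [chi, this]
      · rintro ⟨h1, h2⟩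
        rw [show (2 * p + 1) / 2 = p by omega] at h1 h2
        rw [key q p h1]
        have : p ∈ P := by rw [h2]; omega
        simp [chi, this])
  refine ⟨P', hP', fun a e he => ?_⟩
  have he' : RankLe k (Denumerable.ofNat (List ℕ) (pos a e).unpair.2) := by simpa [pos] using he
  obtain ⟨h1, h2⟩ := hu (pos a e)
  by_cases h : pos a e ∈ P
  · have h3 := h2 ⟨by rwa [show (2 * pos a e + 1) / 2 = pos a e by omega], by
      rw [show (2 * pos a e + 1) / 2 = pos a e by omega]
      exact iff_of_true h (by omega)⟩
    rw [truth, truth, h3]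
    simp [chi, h]
  · have h3 := h1 ⟨by rwa [show (2 * pos a e) / 2 = pos a e by omega], by
      rw [show (2 * pos a e) / 2 = pos a e by omega]
      exact iff_of_false h (by omega)⟩
    rw [truth, truth, h3]
    simp [chi, h]

theorem ScottSet.exists_chain {S : Set (Set ℕ)} (hS : ScottSet S) {A : ℕ → Set ℕ}
    (hA : ∀ k, A k ∈ S) : ∃ P : ℕ → Set ℕ, (∀ k, IsStage S (A k) k (P k)) ∧
      ∀ k a e, RankLe k e → (truth (chi (P k)) a e ↔ truth (chi (P (k + 1))) a e) := by
  choose f hf hf' using fun (k : ℕ) (P : {P // IsStage S (A k) k P}) =>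
    hS.exists_isStage_succ (hA (k + 1)) P.2
  obtain ⟨P₀, h₀⟩ := hS.exists_isStage_zero (hA 0)
  let P : ∀ k, {P // IsStage S (A k) k P} := fun k =>
    Nat.rec ⟨P₀, h₀⟩ (fun k P => ⟨f k P, hf k P⟩) k
  exact ⟨fun k => (P k).1, fun k => (P k).2, fun k => hf' k (P k)⟩

/-! ### The limit of the chain -/

section Limit

variable {S : Set (Set ℕ)} {A P : ℕ → Set ℕ}

/-- Truth in the limit. -/
def limTruth (P : ℕ → Set ℕ) (a : ℕ) (e : List ℕ) : Prop :=
  ∃ k, RankLe k e ∧ truth (chi (P k)) a e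

theorem limTruth_iff
    (hagree : ∀ k a e, RankLe k e → (truth (chi (P k)) a e ↔ truth (chi (P (k + 1))) a e))
    {k a : ℕ} {e : List ℕ} (h : RankLe k e) :
    limTruth P a e ↔ truth (chi (P k)) a e := by
  have mono : ∀ k n, RankLe k e → (truth (chi (P k)) a e ↔ truth (chi (P (k + n))) a e) := by
    intro k n hk
    induction n with
    | zero => rfl
    | succ n ih => exact ih.trans (hagree _ a e (hk.mono (by omega)))
  refine ⟨fun ⟨k', hk', ht⟩ => ?_, fun ht => ⟨k, h, ht⟩⟩
  rw [mono k k' h, add_comm, ← mono k' k hk']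
  exact ht

theorem limTruth_code_iff (hP : ∀ k, IsStage S (A k) k (P k))
    (hagree : ∀ k a e, RankLe k e → (truth (chi (P k)) a e ↔ truth (chi (P (k + 1))) a e))
    (a : Fml) (e : List ℕ) :
    limTruth P a.code e ↔ a.sat (relOf (limTruth P)) (env e) := by
  refine truth_iff_sat (fun a b e => ?_) (fun a e => ?_) (fun r i j l e => ?_) a e
  · obtain ⟨k, hk⟩ := exists_rankLe e
    simp only [limTruth_iff hagree hk, truth_nand (hP k).2.1]
  · obtain ⟨k, hk⟩ := exists_rankLe e
    refine ⟨fun h x => ?_, fun h => ?_⟩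
    · obtain ⟨k', hk'⟩ := exists_rankLe (x :: e)
      have he : RankLe k' e := fun d hd => hk' d (List.mem_cons_of_mem _ hd)
      rw [limTruth_iff hagree he] at h
      rw [limTruth_iff hagree hk']
      exact (truth_all (hP k').2.1 a e).1 h x
    · have hw : RankLe k (wit k a e :: e) := by
        intro d hd
        rcases List.mem_cons.1 hd with rfl | hd
        · simp
        · exact hk d hd
      rw [limTruth_iff hagree hk]
      exact truth_wit (hP k).2.1 a e ((limTruth_iff hagree hw).1 (h _))
  · obtain ⟨k, hk⟩ := exists_rankLe e
    have h3 : RankLe k [env e i, env e j, env e l] := by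
      intro d hd
      simp only [List.mem_cons, List.not_mem_nil, or_false] at hd
      rcases hd with rfl | rfl | rfl <;> exact hk.rank_env _
    rw [limTruth_iff hagree hk, limTruth_iff hagree h3]
    exact truth_atom (hP k).2.1 r i j l e

theorem good_limTruth (hP : ∀ k, IsStage S (A k) k (P k))
    (hagree : ∀ k a e, RankLe k e → (truth (chi (P k)) a e ↔ truth (chi (P (k + 1))) a e))
    : Good (relOf (limTruth P)) := by
  have h0 : limTruth P ax.code [] :=
    (limTruth_iff hagree (k := 0) (by simp [RankLe])).2 (truth_ax (hP 0).2.1)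
  obtain ⟨h1, h2, h3⟩ := (sat_ax _ _).1 ((limTruth_code_iff hP hagree ax []).1 h0)
  refine ⟨h1, h2, h3, fun a e => (sat_lnp _ a e).1 ?_⟩
  obtain ⟨l, hl⟩ := exists_env a.lnp.bd e
  rw [← sat_congr _ _ hl, ← limTruth_code_iff hP hagree]
  obtain ⟨k, hk⟩ := exists_rankLe l
  rw [limTruth_iff hagree hk, truth_code_iff (hP k).2.1]
  exact (sat_lnp _ _ _).2 ((good_relOf_truth (hP k).2.1).lnp a _)

theorem limTruth_digitSeq (hP : ∀ k, IsStage S (A k) k (P k))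
    (hagree : ∀ k a e, RankLe k e → (truth (chi (P k)) a e ↔ truth (chi (P (k + 1))) a e))
    (k i : ℕ) : DigitSeq (relOf (limTruth P)) (A k) (cst k) i := by
  have h1 : RankLe k [cst k i] := by simp [RankLe]
  have h2 : RankLe k [cst k i, cst k (i + 1)] := by simp [RankLe]
  have h := truth_digitSeq (hP k).2.2 i
  rw [← limTruth_iff hagree h1, ← limTruth_iff hagree h2, ← limTruth_iff hagree h2,
    limTruth_code_iff hP hagree, limTruth_code_iff hP hagree, limTruth_code_iff hP hagree,
    sat_fZero, sat_fDouble, sat_fDoubleSucc] at h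
  exact h

/-- The formula `x = 2 y ∨ x = 2 y + 1` in the variables `y, x`. -/
def fHalf : Fml := or (fDouble 1 0) (fDoubleSucc 1 0)

/-- Iterated halving of `d` by witnesses of stage `k`. -/
def halves (k d : ℕ) : ℕ → ℕ
  | 0 => d
  | i + 1 => wit k (neg fHalf).code [halves k d i]

theorem primrec_halves (k d : ℕ) : Primrec (halves k d) := by
  have h : Primrec₂ fun (_ : ℕ) (x : ℕ) => wit k (neg fHalf).code [x] :=
    primrec_wit k (Primrec.const _) (primrec_cons Primrec.snd (Primrec.const []))
  refine (Primrec.nat_rec₁ d h).of_eq fun i => ?_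
  induction i with
  | zero => rfl
  | succ i ih => simp [halves, ih]

theorem limTruth_halves (hP : ∀ k, IsStage S (A k) k (P k))
    (hagree : ∀ k a e, RankLe k e → (truth (chi (P k)) a e ↔ truth (chi (P (k + 1))) a e))
    (d i : ℕ) : let q := halves (rank d) d
    rDouble (relOf (limTruth P)) (q i) (q (i + 1)) ∨
      rDoubleSucc (relOf (limTruth P)) (q i) (q (i + 1)) := by
  intro q
  obtain ⟨h1, h2, h3⟩ := good_limTruth hP hagree
  have hq : RankLe (rank d) [q i] := by
    cases i <;> simp [RankLe, q, halves]
  have hq' : RankLe (rank d) [q (i + 1), q i] := by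
    cases i <;> simp [RankLe, q, halves]
  by_contra hcon
  have hneg : limTruth P (neg fHalf).code [q (i + 1), q i] := by
    rw [limTruth_code_iff hP hagree, sat_neg, fHalf, sat_or, sat_fDouble, sat_fDoubleSucc]
    exact hcon
  rw [limTruth_iff hagree hq'] at hneg
  have hall := truth_wit (hP _).2.1 _ _ hneg
  rw [← limTruth_iff hagree hq] at hall
  obtain ⟨y, hy⟩ := h3.2.2.2.2 (q i)
  have := (limTruth_code_iff hP hagree (all (neg fHalf)) [q i]).1 hall y
  rw [sat_neg, fHalf, sat_or, sat_fDouble, sat_fDoubleSucc] at this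
  exact this hy

theorem limTruth_digits_mem (hP : ∀ k, IsStage S (A k) k (P k))
    (hagree : ∀ k a e, RankLe k e → (truth (chi (P k)) a e ↔ truth (chi (P (k + 1))) a e))
    (hS : ScottSet S) (d : ℕ) :
    {i | rDoubleSucc (relOf (limTruth P)) (halves (rank d) d i)
      (halves (rank d) d (i + 1))} ∈ S := by
  have hg : Primrec fun i => pos (fDoubleSucc 0 1).code
      [halves (rank d) d i, halves (rank d) d (i + 1)] :=
    primrec_pos (Primrec.const _) (primrec_cons (primrec_halves _ _)
      (primrec_cons ((primrec_halves _ _).comp Primrec.succ) (Primrec.const [])))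
  refine hS.2.1.2 (P (rank d)) (hP _).1 _ ?_
  convert turingLE_preimage (X := P (rank d)) hg using 1
  ext i
  have hq : RankLe (rank d) [halves (rank d) d i, halves (rank d) d (i + 1)] := by
    cases i <;> simp [RankLe, halves]
  have h := limTruth_code_iff hP hagree (fDoubleSucc 0 1)
    [halves (rank d) d i, halves (rank d) d (i + 1)]
  rw [limTruth_iff hagree hq, sat_fDoubleSucc] at h
  refine h.symm.trans ?_
  simp [truth, chi]

end Limit

/-- Every countable Scott set is the standard system of a relational presentation of a model of
arithmetic. -/
theorem ScottSet.exists_good {S : Set (Set ℕ)} (hS : ScottSet S) (hc : S.Countable) :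
    ∃ R : ℕ → ℕ → ℕ → ℕ → Prop, Good R ∧
      (∀ A ∈ S, ∃ q : ℕ → ℕ, ∀ i, DigitSeq R A q i) ∧
      ∀ d, ∃ q : ℕ → ℕ, q 0 = d ∧
        (∀ i, rDouble R (q i) (q (i + 1)) ∨ rDoubleSucc R (q i) (q (i + 1))) ∧
        {i | rDoubleSucc R (q i) (q (i + 1))} ∈ S := by
  obtain ⟨A, hA⟩ := hc.exists_eq_range hS.1
  obtain ⟨P, hP, hagree⟩ := hS.exists_chain (A := A) (fun k => hA ▸ Set.mem_range_self k)
  refine ⟨relOf (limTruth P), good_limTruth hP hagree, fun B hB => ?_, fun d => ?_⟩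
  · rw [hA] at hB
    obtain ⟨k, rfl⟩ := hB
    exact ⟨cst k, limTruth_digitSeq hP hagree k⟩
  · exact ⟨halves (rank d) d, rfl, limTruth_halves hP hagree d,
      limTruth_digits_mem hP hagree hS d⟩

end Arith

namespace Arith

open Fml

/-! ### The quotient structure of a relational presentation -/

section Quot

variable {R : ℕ → ℕ → ℕ → ℕ → Prop}

/-- The equivalence relation interpreting equality. -/
def Good.setoid (hR : Good R) : Setoid ℕ where
  r := rEq R
  iseqv := ⟨hR.pre.1, fun {x y} => hR.pre.2.1 x y, fun {x y z} => hR.pre.2.2.1 x y z⟩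

/-- The structure presented by `R`. -/
def Good.Model (hR : Good R) : Type := Quotient hR.setoid

variable (hR : Good R)

/-- The element presented by a number. -/
def Good.cls (x : ℕ) : hR.Model := Quotient.mk hR.setoid x

theorem Good.exists_rep (a : hR.Model) : ∃ x, hR.cls x = a := Quotient.exists_rep a

/-- A representative of an element. -/
noncomputable def Good.rep (a : hR.Model) : ℕ := (hR.exists_rep a).choose

@[simp] theorem Good.cls_rep (a : hR.Model) : hR.cls (hR.rep a) = a := (hR.exists_rep a).choose_spec

theorem Good.cls_eq_cls {x y : ℕ} : hR.cls x = hR.cls y ↔ rEq R x y :=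
  Quotient.eq (r := hR.setoid)

theorem Good.rep_cls (x : ℕ) : rEq R (hR.rep (hR.cls x)) x := hR.cls_eq_cls.1 (hR.cls_rep _)

theorem Good.exists_add (hR : Good R) (x y : ℕ) : ∃ z, rAdd R x y z := by
  obtain ⟨_, _, _, _, _, _, _, _, h, _⟩ := hR.pre
  exact h x y

theorem Good.exists_mul (hR : Good R) (x y : ℕ) : ∃ z, rMul R x y z := by
  obtain ⟨_, _, _, _, _, _, _, _, _, _, h, _⟩ := hR.pre
  exact h x y

theorem Good.exists_zero (hR : Good R) : ∃ z, rZero R z := by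
  obtain ⟨_, _, _, _, _, _, _, _, _, _, _, _, h, _⟩ := hR.pre
  exact h

theorem Good.exists_one (hR : Good R) : ∃ z, rOne R z := by
  obtain ⟨_, _, _, _, _, _, _, _, _, _, _, _, _, _, h, _⟩ := hR.pre
  exact h

noncomputable instance : arith.Structure hR.Model where
  funMap {n} f v :=
    match f with
    | .zero => hR.cls hR.exists_zero.choose
    | .one => hR.cls hR.exists_one.choose
    | .add => hR.cls (hR.exists_add (hR.rep (v 0)) (hR.rep (v 1))).choose
    | .mul => hR.cls (hR.exists_mul (hR.rep (v 0)) (hR.rep (v 1))).choose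
  RelMap {n} r v :=
    match r with
    | .lt => rLt R (hR.rep (v 0)) (hR.rep (v 1))

instance : Countable hR.Model := Quotient.countable

theorem Good.rAdd_cls {x y z : ℕ} : addM (hR.cls x) (hR.cls y) = hR.cls z ↔ rAdd R x y z := by
  obtain ⟨hr, hs, ht, -, hc, -, -, -, htot, hfun, -⟩ := hR.pre
  have h0 := (hR.exists_add (hR.rep (hR.cls x)) (hR.rep (hR.cls y))).choose_spec
  have h1 := hc _ _ (hR.rep_cls x) _ _ (hR.rep_cls y) _ _ (hr _) h0
  refine (hR.cls_eq_cls (x := (hR.exists_add (hR.rep (hR.cls x)) (hR.rep (hR.cls y))).choose)).trans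
    ⟨fun h => hc _ _ (hr _) _ _ (hr _) _ _ h h1, fun h => hfun _ _ _ _ h1 h⟩

theorem Good.rMul_cls {x y z : ℕ} : mulM (hR.cls x) (hR.cls y) = hR.cls z ↔ rMul R x y z := by
  obtain ⟨hr, hs, ht, -, -, hc, -, -, -, -, htot, hfun, -⟩ := hR.pre
  have h0 := (hR.exists_mul (hR.rep (hR.cls x)) (hR.rep (hR.cls y))).choose_spec
  have h1 := hc _ _ (hR.rep_cls x) _ _ (hR.rep_cls y) _ _ (hr _) h0
  refine (hR.cls_eq_cls (x := (hR.exists_mul (hR.rep (hR.cls x)) (hR.rep (hR.cls y))).choose)).trans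
    ⟨fun h => hc _ _ (hr _) _ _ (hr _) _ _ h h1, fun h => hfun _ _ _ _ h1 h⟩

theorem Good.rZero_cls {z : ℕ} : zeroM hR.Model = hR.cls z ↔ rZero R z := by
  obtain ⟨hr, hs, ht, -, -, -, hc, -, -, -, -, -, htot, hfun, -⟩ := hR.pre
  have h1 := hR.exists_zero.choose_spec
  exact (hR.cls_eq_cls (x := hR.exists_zero.choose)).trans
    ⟨fun h => hc _ _ h h1, fun h => hfun _ _ h1 h⟩

theorem Good.rOne_cls {z : ℕ} : oneM hR.Model = hR.cls z ↔ rOne R z := by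
  obtain ⟨hr, hs, ht, -, -, -, -, hc, -, -, -, -, -, -, htot, hfun⟩ := hR.pre
  have h1 := hR.exists_one.choose_spec
  exact (hR.cls_eq_cls (x := hR.exists_one.choose)).trans
    ⟨fun h => hc _ _ h h1, fun h => hfun _ _ h1 h⟩

theorem Good.rLt_cls {x y : ℕ} : ltM (hR.cls x) (hR.cls y) ↔ rLt R x y := by
  obtain ⟨hr, hs, ht, hc, -⟩ := hR.pre
  exact ⟨fun h => hc _ _ (hR.rep_cls x) _ _ (hR.rep_cls y) h,
    fun h => hc _ _ (hs _ _ (hR.rep_cls x)) _ _ (hs _ _ (hR.rep_cls y)) h⟩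

theorem Good.rDouble_cls {x y : ℕ} :
    hR.cls x = addM (hR.cls y) (hR.cls y) ↔ rDouble R x y :=
  eq_comm.trans hR.rAdd_cls

theorem Good.rDoubleSucc_cls {x y : ℕ} :
    hR.cls x = addM (addM (hR.cls y) (hR.cls y)) (oneM hR.Model) ↔ rDoubleSucc R x y := by
  constructor
  · intro h
    obtain ⟨o, ho⟩ := hR.exists_one
    obtain ⟨w, hw⟩ := hR.exists_add y y
    rw [hR.rAdd_cls.2 hw, hR.rOne_cls.2 ho] at h
    exact ⟨w, o, ho, hw, hR.rAdd_cls.1 h.symm⟩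
  · rintro ⟨w, o, ho, hw, h⟩
    rw [hR.rAdd_cls.2 hw, hR.rOne_cls.2 ho, hR.rAdd_cls.2 h]

/-! ### Translation of first-order formulas -/

theorem Good.term_fml {α : Type*} (t : arith.Term α) (ρ : α → ℕ) :
    ∃ a : Fml, ∀ (e : ℕ → ℕ) (x : ℕ),
      t.realize (fun i => hR.cls (e (ρ i))) = hR.cls x ↔ a.sat R (econs x e) := by
  induction t with
  | var i => exact ⟨fEq (ρ i + 1) 0, fun e x => hR.cls_eq_cls⟩
  | func f ts ih =>
    have hbin : ∀ (g : hR.Model → hR.Model → hR.Model) (b : Fml),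
        (∀ x y z e, g (hR.cls x) (hR.cls y) = hR.cls z ↔
          b.sat R (econs x (econs y (econs z e)))) →
        ∀ t₁ t₂ : arith.Term α,
        (∃ a : Fml, ∀ (e : ℕ → ℕ) (x : ℕ),
          t₁.realize (fun i => hR.cls (e (ρ i))) = hR.cls x ↔ a.sat R (econs x e)) →
        (∃ a : Fml, ∀ (e : ℕ → ℕ) (x : ℕ),
          t₂.realize (fun i => hR.cls (e (ρ i))) = hR.cls x ↔ a.sat R (econs x e)) →
        ∃ a : Fml, ∀ (e : ℕ → ℕ) (x : ℕ),
          g (t₁.realize (fun i => hR.cls (e (ρ i)))) (t₂.realize (fun i => hR.cls (e (ρ i)))) =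
            hR.cls x ↔ a.sat R (econs x e) := by
      rintro g b hb t₁ t₂ ⟨a₁, h₁⟩ ⟨a₂, h₂⟩
      refine ⟨ex (ex (and (a₁.rename (fun n => Nat.casesOn n 0 (· + 3)))
        (and (a₂.rename (fun n => Nat.casesOn n 1 (· + 3))) b))), fun e x => ?_⟩
      have e₁ : ∀ y y' : ℕ, (fun i => econs y (econs y' (econs x e))
          ((fun n : ℕ => (Nat.casesOn n 0 (· + 3) : ℕ)) i)) = econs y e := by
        intro y y'
        funext i
        cases i <;> rfl
      have e₂ : ∀ y y' : ℕ, (fun i => econs y (econs y' (econs x e))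
          ((fun n : ℕ => (Nat.casesOn n 1 (· + 3) : ℕ)) i)) = econs y' e := by
        intro y y'
        funext i
        cases i <;> rfl
      simp only [sat_ex, sat_and, sat_rename, e₁, e₂, ← h₁, ← h₂, ← hb]
      constructor
      · intro h
        obtain ⟨y, hy⟩ := hR.exists_rep (t₁.realize (fun i => hR.cls (e (ρ i))))
        obtain ⟨y', hy'⟩ := hR.exists_rep (t₂.realize (fun i => hR.cls (e (ρ i))))
        exact ⟨y', y, hy.symm, hy'.symm, by rw [hy, hy', h]⟩
      · rintro ⟨y', y, hy, hy', h⟩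
        rw [hy, hy', h]
    cases f with
    | zero =>
      refine ⟨fZero 0, fun e x => ?_⟩
      have h : (Term.func arithFunc.zero ts).realize (fun i => hR.cls (e (ρ i))) = zeroM hR.Model :=
        congrArg (Structure.funMap (L := arith) arithFunc.zero) (Subsingleton.elim _ _)
      rw [sat_fZero, econs_zero, ← hR.rZero_cls]
      exact ⟨fun h' => h.symm.trans h', fun h' => h.trans h'⟩
    | one =>
      refine ⟨fOne 0, fun e x => ?_⟩
      have h : (Term.func arithFunc.one ts).realize (fun i => hR.cls (e (ρ i))) = oneM hR.Model :=
        congrArg (Structure.funMap (L := arith) arithFunc.one) (Subsingleton.elim _ _)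
      rw [sat_fOne, econs_zero, ← hR.rOne_cls]
      exact ⟨fun h' => h.symm.trans h', fun h' => h.trans h'⟩
    | add =>
      obtain ⟨a, ha⟩ := hbin addM (fAdd 0 1 2) (fun _ _ _ _ => hR.rAdd_cls) _ _ (ih 0) (ih 1)
      exact ⟨a, ha⟩
    | mul =>
      obtain ⟨a, ha⟩ := hbin mulM (fMul 0 1 2) (fun _ _ _ _ => hR.rMul_cls) _ _ (ih 0) (ih 1)
      exact ⟨a, ha⟩

theorem Good.rel_fml {α : Type*} {Q : hR.Model → hR.Model → Prop} {b : Fml}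
    (hb : ∀ x y e, Q (hR.cls x) (hR.cls y) ↔ b.sat R (econs x (econs y e)))
    (t₁ t₂ : arith.Term α) (ρ : α → ℕ) :
    ∃ a : Fml, ∀ e : ℕ → ℕ, Q (t₁.realize (fun i => hR.cls (e (ρ i))))
      (t₂.realize (fun i => hR.cls (e (ρ i)))) ↔ a.sat R e := by
  obtain ⟨a₁, h₁⟩ := hR.term_fml t₁ ρ
  obtain ⟨a₂, h₂⟩ := hR.term_fml t₂ ρ
  refine ⟨ex (ex (and (a₁.rename (fun n => Nat.casesOn n 0 (· + 2)))
    (and (a₂.rename (fun n => Nat.casesOn n 1 (· + 2))) b))), fun e => ?_⟩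
  have e₁ : ∀ y y' : ℕ, (fun i => econs y (econs y' e)
      ((fun n : ℕ => (Nat.casesOn n 0 (· + 2) : ℕ)) i)) = econs y e := by
    intro y y'
    funext i
    cases i <;> rfl
  have e₂ : ∀ y y' : ℕ, (fun i => econs y (econs y' e)
      ((fun n : ℕ => (Nat.casesOn n 1 (· + 2) : ℕ)) i)) = econs y' e := by
    intro y y'
    funext i
    cases i <;> rfl
  simp only [sat_ex, sat_and, sat_rename, e₁, e₂, ← h₁, ← h₂, ← hb]
  constructor
  · intro h
    obtain ⟨y, hy⟩ := hR.exists_rep (t₁.realize (fun i => hR.cls (e (ρ i))))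
    obtain ⟨y', hy'⟩ := hR.exists_rep (t₂.realize (fun i => hR.cls (e (ρ i))))
    exact ⟨y', y, hy.symm, hy'.symm, by rwa [hy, hy']⟩
  · rintro ⟨y', y, hy, hy', h⟩
    rwa [hy, hy']

theorem Good.formula_fml {α : Type*} {n : ℕ} (φ : arith.BoundedFormula α n)
    (ρ : α ⊕ Fin n → ℕ) : ∃ a : Fml, ∀ e : ℕ → ℕ,
      φ.Realize (fun i => hR.cls (e (ρ (.inl i)))) (fun i => hR.cls (e (ρ (.inr i)))) ↔
        a.sat R e := by
  have helim : ∀ {n : ℕ} (ρ : α ⊕ Fin n → ℕ) (e : ℕ → ℕ),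
      Sum.elim (fun i => hR.cls (e (ρ (.inl i)))) (fun i => hR.cls (e (ρ (.inr i)))) =
        fun i => hR.cls (e (ρ i)) := by
    intro n ρ e
    funext i
    cases i <;> rfl
  induction φ with
  | falsum => exact ⟨neg (all (fEq 0 0)), fun e => by
      rw [sat_neg, sat_all]
      exact ⟨fun h => h.elim, fun h => h fun x => hR.pre.1 x⟩⟩
  | equal t₁ t₂ =>
    obtain ⟨a, ha⟩ := hR.rel_fml (Q := Eq) (b := fEq 0 1) (fun _ _ _ => hR.cls_eq_cls) t₁ t₂ ρ
    refine ⟨a, fun e => ?_⟩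
    rw [BoundedFormula.Realize, helim, ha]
  | rel r ts =>
    cases r with
    | lt =>
      obtain ⟨a, ha⟩ := hR.rel_fml (Q := ltM) (b := fLt 0 1) (fun _ _ _ => hR.rLt_cls)
        (ts 0) (ts 1) ρ
      refine ⟨a, fun e => ?_⟩
      rw [← ha, ← helim]
      refine iff_of_eq (congrArg (Structure.RelMap (L := arith) arithRel.lt) ?_)
      funext i
      fin_cases i <;> rfl
  | imp φ ψ ihφ ihψ =>
    obtain ⟨a, ha⟩ := ihφ ρ
    obtain ⟨b, hb⟩ := ihψ ρ
    exact ⟨imp a b, fun e => by rw [BoundedFormula.Realize, sat_imp, ha, hb]⟩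
  | all φ ih =>
    obtain ⟨a, ha⟩ := ih (Sum.elim (fun i => ρ (.inl i) + 1)
      (Fin.snoc (α := fun _ => ℕ) (fun i => ρ (.inr i) + 1) 0))
    refine ⟨all a, fun e => ?_⟩
    rw [BoundedFormula.Realize, sat_all]
    have key : ∀ x, φ.Realize (fun i => hR.cls (e (ρ (.inl i))))
        (Fin.snoc (fun i => hR.cls (e (ρ (.inr i)))) (hR.cls x)) ↔ a.sat R (econs x e) := by
      intro x
      rw [← ha]
      refine iff_of_eq (congrArg _ ?_)
      funext i
      refine Fin.lastCases ?_ (fun i => ?_) i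
      · simp
      · simp
    refine ⟨fun h x => (key x).1 (h _), fun h b => ?_⟩
    obtain ⟨x, rfl⟩ := hR.exists_rep b
    exact (key x).2 (h x)

theorem Good.definable_fml {s : Set hR.Model}
    (hs : Set.Definable₁ (Set.univ : Set hR.Model) arith s) :
    ∃ (a : Fml) (e : ℕ → ℕ), ∀ x, hR.cls x ∈ s ↔ a.sat R (econs x e) := by
  obtain ⟨φ, hφ⟩ := Set.definable_iff_exists_formula_sum.1 hs
  obtain ⟨g, hg⟩ := exists_injective_nat (Set.univ : Set hR.Model)
  obtain ⟨a, ha⟩ := hR.formula_fml φ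
    (Sum.elim (Sum.elim (fun c => g c + 1) fun _ => 0) fun i => i.elim0)
  let e : ℕ → ℕ := fun n => hR.rep (Function.extend g (fun c => (c : hR.Model))
    (fun _ => hR.cls 0) n)
  refine ⟨a, e, fun x => ?_⟩
  have h1 : (fun _ => hR.cls x) ∈ {y : Fin 1 → hR.Model | y 0 ∈ s} ↔ hR.cls x ∈ s := Iff.rfl
  rw [← h1, hφ, ← ha]
  refine iff_of_eq (congrArg₂ (BoundedFormula.Realize φ) ?_ (Subsingleton.elim _ _))
  funext i
  rcases i with c | i
  · simp [e, hg.extend_apply]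
  · simp

theorem Good.isPAModel : IsPAModel hR.Model := by
  obtain ⟨p1, p2, p3, p4, p5, p6, p6', p7, p8⟩ := hR.basic
  obtain ⟨o, ho⟩ := hR.exists_one
  obtain ⟨z, hz⟩ := hR.exists_zero
  have ho' := hR.rOne_cls.2 ho
  have hz' := hR.rZero_cls.2 hz
  have hsurj := hR.exists_rep
  simp only [IsPAModel, ho', hz']
  refine ⟨fun x => ?_, fun x y => ?_, fun x => ?_, fun x y => ?_, fun x => ?_, fun x y => ?_,
    fun x => ?_, fun x y => ?_, fun s hs h0 h1 x => ?_⟩ <;> obtain ⟨x, rfl⟩ := hsurj x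
  · exact hR.rAdd_cls.2 (p1 _ _ hz)
  · obtain ⟨y, rfl⟩ := hsurj y
    obtain ⟨y', hy'⟩ := hR.exists_add y o
    obtain ⟨w, hw⟩ := hR.exists_add x y
    obtain ⟨w', hw'⟩ := hR.exists_add w o
    rw [hR.rAdd_cls.2 hy', hR.rAdd_cls.2 hw, hR.rAdd_cls.2 hw']
    exact hR.rAdd_cls.2 (p2 _ _ _ _ _ _ ho hy' hw hw')
  · exact hR.rMul_cls.2 (p3 _ _ hz)
  · obtain ⟨y, rfl⟩ := hsurj y
    obtain ⟨y', hy'⟩ := hR.exists_add y o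
    obtain ⟨w, hw⟩ := hR.exists_mul x y
    obtain ⟨w', hw'⟩ := hR.exists_add w x
    rw [hR.rAdd_cls.2 hy', hR.rMul_cls.2 hw, hR.rAdd_cls.2 hw']
    exact hR.rMul_cls.2 (p4 _ _ _ _ _ _ ho hy' hw hw')
  · rw [hR.rLt_cls]
    exact p5 _ _ hz
  · obtain ⟨y, rfl⟩ := hsurj y
    obtain ⟨y', hy'⟩ := hR.exists_add y o
    rw [hR.rAdd_cls.2 hy', hR.rLt_cls, hR.rLt_cls, hR.cls_eq_cls]
    exact ⟨p6 _ _ _ _ ho hy', p6' _ _ _ _ ho hy'⟩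
  · obtain ⟨y', hy'⟩ := hR.exists_add x o
    rw [hR.rAdd_cls.2 hy', ← hz', ne_comm, Ne, hR.rZero_cls]
    exact p7 _ _ _ ho hy'
  · obtain ⟨y, rfl⟩ := hsurj y
    obtain ⟨w, hw⟩ := hR.exists_add y o
    intro h
    rw [hR.rAdd_cls.2 hw, hR.rAdd_cls] at h
    exact hR.cls_eq_cls.2 (p8 _ _ _ _ ho h hw)
  · obtain ⟨a, e, ha⟩ := hR.definable_fml hs
    by_contra hx
    rw [ha] at hx
    obtain ⟨x, hx, hmin⟩ := hR.lnp a e ⟨x, hx⟩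
    simp only [← ha] at hx hmin
    rcases hR.half.1 x with hx0 | ⟨y, o', ho1, hy, hlt⟩
    · rw [← hR.rZero_cls.2 hx0, hz'] at hx
      exact hx h0
    · have h2 := h1 _ (hmin y hlt)
      rw [← ho', hR.rOne_cls.2 ho1, hR.rAdd_cls.2 hy] at h2
      exact hx h2

end Quot

/-- Every countable Scott set is coded in a countable model of Peano arithmetic. -/
theorem ScottSet.exists_model {S : Set (Set ℕ)} (hS : ScottSet S) (hc : S.Countable) :
    ∃ (M : Type) (_ : arith.Structure M), IsPAModel M ∧ Countable M ∧
      (∀ A ∈ S, ∃ q : ℕ → M, ∀ i, q i ≠ zeroM M ∧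
        (i ∉ A → q i = addM (q (i + 1)) (q (i + 1))) ∧
        (i ∈ A → q i = addM (addM (q (i + 1)) (q (i + 1))) (oneM M))) ∧
      ∀ d : M, ∃ q : ℕ → M, q 0 = d ∧
        (∀ i, q i = addM (q (i + 1)) (q (i + 1)) ∨
          q i = addM (addM (q (i + 1)) (q (i + 1))) (oneM M)) ∧
        {i | q i = addM (addM (q (i + 1)) (q (i + 1))) (oneM M)} ∈ S := by
  obtain ⟨R, hR, h1, h2⟩ := hS.exists_good hc
  refine ⟨hR.Model, inferInstance, hR.isPAModel, inferInstance, fun A hA => ?_, fun d => ?_⟩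
  · obtain ⟨q, hq⟩ := h1 A hA
    refine ⟨fun i => hR.cls (q i), fun i => ?_⟩
    rw [ne_comm, Ne, hR.rZero_cls, hR.rDouble_cls, hR.rDoubleSucc_cls]
    exact hq i
  · obtain ⟨x, rfl⟩ := hR.exists_rep d
    obtain ⟨q, rfl, hq, hmem⟩ := h2 x
    refine ⟨fun i => hR.cls (q i), rfl, fun i => ?_, ?_⟩
    · rw [hR.rDouble_cls, hR.rDoubleSucc_cls]
      exact hq i
    · simpa only [hR.rDoubleSucc_cls] using hmem

end Arith

namespace Arith

/-! ### Closure properties of definable relations -/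

section Definability

variable {M : Type*} [arith.Structure M]

/-- A function of an assignment of variables given by a term with parameters. -/
class TermFun (f : (ℕ → M) → M) : Prop where
  out : ∃ t : arith.Term (M ⊕ ℕ), ∀ v, t.realize (Sum.elim id v) = f v

/-- A property of an assignment of variables given by a formula with parameters. -/
class DefProp (P : (ℕ → M) → Prop) : Prop where
  out : ∃ φ : arith.Formula (M ⊕ ℕ), ∀ v, φ.Realize (Sum.elim id v) ↔ P v

instance (c : M) : TermFun fun _ => c := ⟨Term.var (.inl c), fun _ => rfl⟩

instance (n : ℕ) : TermFun fun v : ℕ → M => v n := ⟨Term.var (.inr n), fun _ => rfl⟩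

instance {f g : (ℕ → M) → M} [hf : TermFun f] [hg : TermFun g] :
    TermFun fun v => addM (f v) (g v) := by
  obtain ⟨s, hs⟩ := hf.out
  obtain ⟨t, ht⟩ := hg.out
  refine ⟨Term.func (L := arith) arithFunc.add ![s, t], fun v => ?_⟩
  rw [← hs, ← ht]
  refine congrArg (Structure.funMap (L := arith) arithFunc.add) ?_
  funext i
  fin_cases i <;> rfl

instance {f g : (ℕ → M) → M} [hf : TermFun f] [hg : TermFun g] :
    TermFun fun v => mulM (f v) (g v) := by
  obtain ⟨s, hs⟩ := hf.out
  obtain ⟨t, ht⟩ := hg.out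
  refine ⟨Term.func (L := arith) arithFunc.mul ![s, t], fun v => ?_⟩
  rw [← hs, ← ht]
  refine congrArg (Structure.funMap (L := arith) arithFunc.mul) ?_
  funext i
  fin_cases i <;> rfl

instance (p : Prop) : DefProp fun _ : ℕ → M => p := by
  by_cases hp : p
  · exact ⟨⊤, fun v => by simp [hp, Formula.Realize]⟩
  · exact ⟨⊥, fun v => by simp [hp, Formula.Realize]⟩

instance {f g : (ℕ → M) → M} [hf : TermFun f] [hg : TermFun g] :
    DefProp fun v => f v = g v := by
  obtain ⟨s, hs⟩ := hf.out
  obtain ⟨t, ht⟩ := hg.out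
  exact ⟨s.equal t, fun v => by rw [Formula.realize_equal, hs, ht]⟩

instance {f g : (ℕ → M) → M} [hf : TermFun f] [hg : TermFun g] :
    DefProp fun v => ltM (f v) (g v) := by
  obtain ⟨s, hs⟩ := hf.out
  obtain ⟨t, ht⟩ := hg.out
  refine ⟨Relations.formula (L := arith) arithRel.lt ![s, t], fun v => ?_⟩
  refine Formula.realize_rel.trans ?_
  rw [← hs, ← ht]
  refine iff_of_eq (congrArg (Structure.RelMap (L := arith) arithRel.lt) ?_)
  funext i
  fin_cases i <;> rfl

instance {P Q : (ℕ → M) → Prop} [hP : DefProp P] [hQ : DefProp Q] :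
    DefProp fun v => P v ∧ Q v := by
  obtain ⟨φ, hφ⟩ := hP.out
  obtain ⟨ψ, hψ⟩ := hQ.out
  exact ⟨φ ⊓ ψ, fun v => by rw [Formula.realize_inf, hφ, hψ]⟩

instance {P Q : (ℕ → M) → Prop} [hP : DefProp P] [hQ : DefProp Q] :
    DefProp fun v => P v ∨ Q v := by
  obtain ⟨φ, hφ⟩ := hP.out
  obtain ⟨ψ, hψ⟩ := hQ.out
  exact ⟨φ ⊔ ψ, fun v => by rw [Formula.realize_sup, hφ, hψ]⟩

instance {P Q : (ℕ → M) → Prop} [hP : DefProp P] [hQ : DefProp Q] :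
    DefProp fun v => P v → Q v := by
  obtain ⟨φ, hφ⟩ := hP.out
  obtain ⟨ψ, hψ⟩ := hQ.out
  exact ⟨φ.imp ψ, fun v => by rw [Formula.realize_imp, hφ, hψ]⟩

instance {P : (ℕ → M) → Prop} [hP : DefProp P] : DefProp fun v => ¬ P v := by
  obtain ⟨φ, hφ⟩ := hP.out
  exact ⟨φ.not, fun v => by rw [Formula.realize_not, hφ]⟩

instance {f g : (ℕ → M) → M} [hf : TermFun f] [hg : TermFun g] :
    DefProp fun v => f v ≠ g v :=
  inferInstanceAs (DefProp fun v => ¬ f v = g v)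

instance {P Q : (ℕ → M) → Prop} [hP : DefProp P] [hQ : DefProp Q] :
    DefProp fun v => P v ↔ Q v := by
  simp only [iff_def]
  infer_instance

/-- Substitution of terms for variables. -/
theorem DefProp.subst {P : (ℕ → M) → Prop} (hP : DefProp P) (f : (ℕ → M) → ℕ → M)
    (hf : ∀ n, TermFun fun v => f v n) : DefProp fun v => P (f v) := by
  obtain ⟨φ, hφ⟩ := hP.out
  choose t ht using fun n => (hf n).out
  refine ⟨φ.subst (Sum.elim (fun c => Term.var (.inl c)) t), fun v => ?_⟩
  rw [Formula.Realize, BoundedFormula.realize_subst, ← hφ, Formula.Realize]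
  refine iff_of_eq (congrArg₂ _ ?_ rfl)
  funext i
  rcases i with c | n
  · rfl
  · exact ht n v

instance {P : (ℕ → M) → M → Prop} [hP : DefProp fun v => P (fun i => v (i + 1)) (v 0)] :
    DefProp fun v => ∃ x, P v x := by
  obtain ⟨φ, hφ⟩ := hP.out
  let ψ : arith.BoundedFormula (M ⊕ ℕ) 1 := BoundedFormula.relabel (n := 1)
    (Sum.elim (fun c => .inl (.inl c)) fun n => Nat.casesOn n (.inr 0) fun n => .inl (.inr n)) φ
  refine ⟨ψ.ex, fun v => ?_⟩
  rw [Formula.Realize, BoundedFormula.realize_ex]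
  refine exists_congr fun x => ?_
  have h := hφ (fun n => Nat.casesOn n x v)
  refine Iff.trans ?_ h
  rw [BoundedFormula.realize_relabel, Formula.Realize]
  refine iff_of_eq (congrArg₂ _ ?_ (Subsingleton.elim _ _))
  funext i
  rcases i with c | _ | n <;> rfl

instance {P : (ℕ → M) → M → Prop} [hP : DefProp fun v => P (fun i => v (i + 1)) (v 0)] :
    DefProp fun v => ∀ x, P v x := by
  have h : DefProp fun v => ¬ ∃ x, ¬ P v x := inferInstance
  simpa only [not_exists, not_not] using h

/-- A definable binary relation. -/
class DefRel (G : M → M → Prop) : Prop where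
  out : DefProp fun v => G (v 0) (v 1)

/-- A definable unary relation. -/
class DefPred (D : M → Prop) : Prop where
  out : DefProp fun v => D (v 0)

instance (priority := low) {D : M → Prop} [hD : DefPred D] {f : (ℕ → M) → M} [hf : TermFun f] :
    DefProp fun v => D (f v) :=
  hD.out.subst (fun v _ => f v) fun _ => hf

instance (priority := low) {G : M → M → Prop} [hG : DefRel G] {f g : (ℕ → M) → M}
    [hf : TermFun f] [hg : TermFun g] : DefProp fun v => G (f v) (g v) :=
  hG.out.subst (fun v n => Nat.casesOn n (f v) fun _ => g v) fun n => by
    cases n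
    · exact hf
    · exact hg

theorem DefPred.definable {D : M → Prop} (hD : DefPred D) :
    Set.Definable₁ (Set.univ : Set M) arith {x | D x} := by
  obtain ⟨φ, hφ⟩ := hD.out.out
  refine Set.definable_iff_exists_formula_sum.2
    ⟨φ.relabel (Sum.map (fun c => ⟨c, trivial⟩) fun _ => 0), Set.ext fun x => ?_⟩
  have h := hφ (fun _ => x 0)
  refine Iff.trans h.symm ?_
  rw [Set.mem_ofPred_eq, Formula.realize_relabel]
  refine iff_of_eq (congrArg _ ?_)
  funext i
  rcases i with c | n <;> rfl

end Definability

/-- The class of models of Peano arithmetic. -/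
class PAModel (M : Type*) [arith.Structure M] : Prop where
  out : IsPAModel M

section PA

variable {M : Type*} [arith.Structure M] [PAModel M]

theorem PAModel.induction (D : M → Prop) [hD : DefPred D] (h0 : D (zeroM M))
    (h1 : ∀ x, D x → D (addM x (oneM M))) (x : M) : D x :=
  (PAModel.out (M := M)).2.2.2.2.2.2.2.2 {x | D x} hD.definable h0 h1 x

theorem PAModel.add_zero (x : M) : addM x (zeroM M) = x := (PAModel.out (M := M)).1 x

theorem PAModel.add_succ (x y : M) : addM x (addM y (oneM M)) = addM (addM x y) (oneM M) :=
  (PAModel.out (M := M)).2.1 x y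

theorem PAModel.mul_zero (x : M) : mulM x (zeroM M) = zeroM M :=
  (PAModel.out (M := M)).2.2.1 x

theorem PAModel.mul_succ (x y : M) : mulM x (addM y (oneM M)) = addM (mulM x y) x :=
  (PAModel.out (M := M)).2.2.2.1 x y

theorem PAModel.not_lt_zero (x : M) : ¬ ltM x (zeroM M) := (PAModel.out (M := M)).2.2.2.2.1 x

theorem PAModel.lt_succ (x y : M) : ltM x (addM y (oneM M)) ↔ ltM x y ∨ x = y :=
  (PAModel.out (M := M)).2.2.2.2.2.1 x y

theorem PAModel.succ_ne_zero (x : M) : addM x (oneM M) ≠ zeroM M :=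
  (PAModel.out (M := M)).2.2.2.2.2.2.1 x

theorem PAModel.succ_inj {x y : M} (h : addM x (oneM M) = addM y (oneM M)) : x = y :=
  (PAModel.out (M := M)).2.2.2.2.2.2.2.1 x y h

theorem PAModel.zero_add (x : M) : addM (zeroM M) x = x := by
  refine PAModel.induction (fun x => addM (zeroM M) x = x) (hD := ⟨inferInstance⟩)
    (add_zero _) (fun x h => ?_) x
  rw [add_succ, h]

theorem PAModel.add_assoc (x y z : M) : addM (addM x y) z = addM x (addM y z) := by
  refine PAModel.induction (fun z => addM (addM x y) z = addM x (addM y z))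
    (hD := ⟨inferInstance⟩) ?_ (fun z h => ?_) z
  · rw [add_zero, add_zero]
  · rw [add_succ, h, add_succ, add_succ]

theorem PAModel.one_add (x : M) : addM (oneM M) x = addM x (oneM M) := by
  refine PAModel.induction (fun x => addM (oneM M) x = addM x (oneM M)) (hD := ⟨inferInstance⟩)
    ?_ (fun x h => ?_) x
  · rw [add_zero, zero_add]
  · rw [add_succ, h]

theorem PAModel.add_comm (x y : M) : addM x y = addM y x := by
  refine PAModel.induction (fun y => addM x y = addM y x) (hD := ⟨inferInstance⟩)
    ?_ (fun y h => ?_) y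
  · rw [add_zero, zero_add]
  · rw [add_succ, h, add_assoc, ← one_add x, add_assoc]

theorem PAModel.mul_add (x y z : M) : mulM x (addM y z) = addM (mulM x y) (mulM x z) := by
  refine PAModel.induction (fun z => mulM x (addM y z) = addM (mulM x y) (mulM x z))
    (hD := ⟨inferInstance⟩) ?_ (fun z h => ?_) z
  · rw [add_zero, mul_zero, add_zero]
  · rw [add_succ, mul_succ, h, mul_succ, add_assoc]

theorem PAModel.add_mul (x y z : M) : mulM (addM x y) z = addM (mulM x z) (mulM y z) := by
  refine PAModel.induction (fun z => mulM (addM x y) z = addM (mulM x z) (mulM y z))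
    (hD := ⟨inferInstance⟩) ?_ (fun z h => ?_) z
  · rw [mul_zero, mul_zero, mul_zero, add_zero]
  · rw [mul_succ, mul_succ, mul_succ, h, add_assoc, add_assoc, ← add_assoc (mulM y z),
      add_comm (mulM y z) x, add_assoc]

theorem PAModel.mul_one (x : M) : mulM x (oneM M) = x := by
  rw [← zero_add (oneM M), mul_succ, mul_zero, zero_add]

theorem PAModel.zero_mul (x : M) : mulM (zeroM M) x = zeroM M := by
  refine PAModel.induction (fun x => mulM (zeroM M) x = zeroM M) (hD := ⟨inferInstance⟩)
    (mul_zero _) (fun x h => ?_) x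
  rw [mul_succ, h, add_zero]

theorem PAModel.one_mul (x : M) : mulM (oneM M) x = x := by
  refine PAModel.induction (fun x => mulM (oneM M) x = x) (hD := ⟨inferInstance⟩)
    (mul_zero _) (fun x h => ?_) x
  rw [mul_succ, h]

theorem PAModel.mul_comm (x y : M) : mulM x y = mulM y x := by
  refine PAModel.induction (fun y => mulM x y = mulM y x) (hD := ⟨inferInstance⟩)
    ?_ (fun y h => ?_) y
  · rw [mul_zero, zero_mul]
  · rw [mul_succ, add_mul, h, one_mul]

theorem PAModel.mul_assoc (x y z : M) : mulM (mulM x y) z = mulM x (mulM y z) := by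
  refine PAModel.induction (fun z => mulM (mulM x y) z = mulM x (mulM y z))
    (hD := ⟨inferInstance⟩) ?_ (fun z h => ?_) z
  · rw [mul_zero, mul_zero, mul_zero]
  · rw [mul_succ, h, mul_succ, mul_add]

/-- The commutative semiring structure of a model of Peano arithmetic. -/
noncomputable instance PAModel.commSemiring : CommSemiring M where
  add := addM
  mul := mulM
  zero := zeroM M
  one := oneM M
  add_assoc := add_assoc
  add_comm := add_comm
  zero_add := zero_add
  add_zero := add_zero
  mul_assoc := mul_assoc
  mul_comm := mul_comm
  one_mul := one_mul
  mul_one := mul_one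
  zero_mul := zero_mul
  mul_zero := mul_zero
  left_distrib := mul_add
  right_distrib := add_mul
  nsmul := @nsmulRec M ⟨zeroM M⟩ ⟨addM⟩
  nsmul_zero _ := rfl
  nsmul_succ _ _ := rfl

theorem PAModel.induction' (D : M → Prop) [hD : DefPred D] (h0 : D 0)
    (h1 : ∀ x, D x → D (x + 1)) (x : M) : D x :=
  PAModel.induction D h0 h1 x

theorem PAModel.add_right_cancel' {x y z : M} (h : x + z = y + z) : x = y := by
  have key : x + z = y + z → x = y :=
    PAModel.induction (fun z => addM x z = addM y z → x = y) (hD := ⟨inferInstance⟩)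
      (fun h => by rwa [add_zero, add_zero] at h)
      (fun z ih h => ih (succ_inj (by rwa [add_succ, add_succ] at h))) z
  exact key h

theorem PAModel.lt_iff (x y : M) : ltM x y ↔ ∃ z, y = x + z + 1 := by
  have key := PAModel.induction (fun y => ltM x y ↔ ∃ z, y = addM (addM x z) (oneM M))
    (hD := ⟨inferInstance⟩) ?_ ?_ y
  · exact key
  · exact ⟨fun h => (not_lt_zero _ h).elim, fun ⟨z, h⟩ => (succ_ne_zero _ h.symm).elim⟩
  · intro y ih
    rw [lt_succ, ih]
    constructor
    · rintro (⟨z, rfl⟩ | rfl)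
      · exact ⟨addM z (oneM M), by rw [add_succ]⟩
      · exact ⟨zeroM M, by rw [add_zero]⟩
    · rintro ⟨z, h⟩
      have h := succ_inj h
      have hz := PAModel.induction (fun z => z = zeroM M ∨ ∃ w, z = addM w (oneM M))
        (hD := ⟨inferInstance⟩) (Or.inl rfl) (fun w _ => Or.inr ⟨w, rfl⟩) z
      rcases hz with rfl | ⟨w, rfl⟩
      · exact Or.inr (by rw [h, add_zero])
      · exact Or.inl ⟨w, by rw [h, add_succ]⟩

theorem PAModel.lt_trichotomy (x y : M) : ltM x y ∨ x = y ∨ ltM y x := by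
  refine PAModel.induction (fun y => ltM x y ∨ x = y ∨ ltM y x)
    (hD := ⟨inferInstance⟩) ?_ (fun y ih => ?_) y
  · have hx := PAModel.induction (fun z => z = zeroM M ∨ ∃ w, z = addM w (oneM M))
      (hD := ⟨inferInstance⟩) (Or.inl rfl) (fun w _ => Or.inr ⟨w, rfl⟩) x
    rcases hx with rfl | ⟨w, rfl⟩
    · exact Or.inr (Or.inl rfl)
    · exact Or.inr (Or.inr ((lt_iff _ _).2 ⟨w, congrArg (addM · _) (zero_add w).symm⟩))
  · rw [lt_succ]
    rcases ih with h | h | h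
    · exact Or.inl (Or.inl h)
    · exact Or.inl (Or.inr h)
    · obtain ⟨z, rfl⟩ := (lt_iff _ _).1 h
      have hz := PAModel.induction (fun z => z = zeroM M ∨ ∃ w, z = addM w (oneM M))
        (hD := ⟨inferInstance⟩) (Or.inl rfl) (fun w _ => Or.inr ⟨w, rfl⟩) z
      rcases hz with rfl | ⟨w, rfl⟩
      · exact Or.inr (Or.inl (congrArg (addM · _) (add_zero y)))
      · refine Or.inr (Or.inr ((lt_iff _ _).2 ⟨w, ?_⟩))
        change y + (w + 1) + 1 = y + 1 + w + 1
        ring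

theorem PAModel.lt_asymm' {x y : M} (h : ltM x y) : ¬ leM y x := by
  intro h'
  obtain ⟨u, rfl⟩ := (lt_iff _ _).1 h
  obtain ⟨w, hw⟩ : ∃ w : M, x = x + u + 1 + w := by
    rcases h' with h' | h'
    · obtain ⟨w, hw⟩ := (lt_iff _ _).1 h'
      exact ⟨w + 1, by rw [← _root_.add_assoc]; exact hw⟩
    · exact ⟨0, by rw [_root_.add_zero]; exact h'.symm⟩
  have h0 : 0 + x = u + w + 1 + x := by
    rw [_root_.zero_add]
    exact hw.trans (by ring)
  exact succ_ne_zero _ (add_right_cancel' h0).symm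

/-- The order of a model of Peano arithmetic. -/
noncomputable instance PAModel.linearOrder : LinearOrder M where
  lt := ltM
  le := leM
  le_refl x := Or.inr rfl
  le_trans x y z := by
    rintro (h | rfl) (h' | rfl)
    · obtain ⟨u, rfl⟩ := (lt_iff _ _).1 h
      obtain ⟨w, rfl⟩ := (lt_iff _ _).1 h'
      exact Or.inl ((lt_iff _ _).2 ⟨u + w + 1, by ring⟩)
    · exact Or.inl h
    · exact Or.inl h'
    · exact Or.inr rfl
  lt_iff_le_not_ge x y :=
    ⟨fun h => ⟨Or.inl h, lt_asymm' h⟩, fun ⟨h, h'⟩ => h.resolve_right fun e => h' (Or.inr e.symm)⟩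
  le_antisymm x y h h' := h.resolve_left fun h => lt_asymm' h h'
  le_total x y := by
    rcases lt_trichotomy x y with h | h | h
    · exact Or.inl (Or.inl h)
    · exact Or.inl (Or.inr h)
    · exact Or.inr (Or.inl h)
  toDecidableLE := Classical.decRel _

theorem PAModel.lt_iff_exists {x y : M} : x < y ↔ ∃ z, y = x + z + 1 := lt_iff x y

theorem PAModel.lt_add_one_iff' {x y : M} : x < y + 1 ↔ x ≤ y := lt_succ x y

theorem PAModel.add_one_le_iff' {x y : M} : x + 1 ≤ y ↔ x < y := by
  rw [← not_lt, lt_add_one_iff', not_le]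

theorem PAModel.le_iff_exists {x y : M} : x ≤ y ↔ ∃ z, y = x + z := by
  rw [← lt_add_one_iff', lt_iff_exists]
  exact exists_congr fun z => ⟨fun h => add_right_cancel' h, fun h => by rw [h]⟩

instance : CanonicallyOrderedAdd M where
  le_self_add x y := PAModel.le_iff_exists.2 ⟨y, rfl⟩
  le_add_self x y := PAModel.le_iff_exists.2 ⟨y, by ring⟩
  exists_add_of_le h := PAModel.le_iff_exists.1 h

instance : IsOrderedCancelAddMonoid M where
  add_le_add_left x y h z := by
    obtain ⟨w, rfl⟩ := PAModel.le_iff_exists.1 h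
    exact PAModel.le_iff_exists.2 ⟨w, by ring⟩
  le_of_add_le_add_left x y z h := by
    obtain ⟨w, h⟩ := PAModel.le_iff_exists.1 h
    refine PAModel.le_iff_exists.2 ⟨w, PAModel.add_right_cancel' (z := x) ?_⟩
    rw [_root_.add_comm z, h]
    ring

instance : Nontrivial M :=
  ⟨⟨(0 : M) + 1, 0, PAModel.succ_ne_zero (0 : M)⟩⟩

theorem PAModel.mul_lt_mul_left' {x y z : M} (hx : 0 < x) (h : y < z) : x * y < x * z := by
  obtain ⟨u, rfl⟩ := PAModel.lt_iff_exists.1 hx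
  obtain ⟨w, rfl⟩ := PAModel.lt_iff_exists.1 h
  exact PAModel.lt_iff_exists.2 ⟨u * w + u + w, by ring⟩

instance : IsStrictOrderedRing M where
  zero_le_one := _root_.zero_le
  mul_lt_mul_of_pos_left x hx y z h := PAModel.mul_lt_mul_left' hx h
  mul_lt_mul_of_pos_right x hx y z h := by
    rw [_root_.mul_comm y, _root_.mul_comm z]
    exact PAModel.mul_lt_mul_left' hx h

theorem PAModel.numeral_eq (n : ℕ) : numeral M n = (n : M) := by
  induction n with
  | zero => exact Nat.cast_zero.symm
  | succ n ih =>
    rw [Nat.cast_succ, ← ih]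
    rfl

instance {f g : (ℕ → M) → M} [TermFun f] [TermFun g] : TermFun fun v => f v + g v :=
  inferInstanceAs (TermFun fun v => addM (f v) (g v))

instance {f g : (ℕ → M) → M} [TermFun f] [TermFun g] : TermFun fun v => f v * g v :=
  inferInstanceAs (TermFun fun v => mulM (f v) (g v))

instance {f g : (ℕ → M) → M} [TermFun f] [TermFun g] : DefProp fun v => f v < g v :=
  inferInstanceAs (DefProp fun v => ltM (f v) (g v))

instance {f g : (ℕ → M) → M} [TermFun f] [TermFun g] : DefProp fun v => f v ≤ g v :=
  inferInstanceAs (DefProp fun v => ltM (f v) (g v) ∨ f v = g v)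

theorem PAModel.exists_cast_of_lt {x : M} {n : ℕ} (h : x < n) : ∃ k < n, x = (k : M) := by
  induction n with
  | zero => exact (PAModel.not_lt_zero x (by simpa using h)).elim
  | succ n ih =>
    rw [Nat.cast_succ, PAModel.lt_add_one_iff', le_iff_lt_or_eq] at h
    rcases h with h | h
    · obtain ⟨k, hk, e⟩ := ih h
      exact ⟨k, hk.trans (Nat.lt_succ_self n), e⟩
    · exact ⟨n, Nat.lt_succ_self n, h⟩

theorem PAModel.exists_cast_of_le {x : M} {n : ℕ} (h : x ≤ n) : ∃ k ≤ n, x = (k : M) := by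
  have h' : x < ((n + 1 : ℕ) : M) := by
    rw [Nat.cast_succ]
    exact PAModel.lt_add_one_iff'.2 h
  obtain ⟨k, hk, e⟩ := PAModel.exists_cast_of_lt h'
  exact ⟨k, Nat.le_of_lt_succ hk, e⟩

theorem PAModel.isStd_iff {x : M} : IsStd x ↔ ∃ n : ℕ, x = n := by
  simp only [IsStd, PAModel.numeral_eq]

theorem PAModel.cast_lt_of_not_isStd {x : M} (h : ¬ IsStd x) (n : ℕ) : (n : M) < x := by
  rw [PAModel.isStd_iff] at h
  by_contra h'
  obtain ⟨k, -, e⟩ := PAModel.exists_cast_of_le (not_lt.1 h')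
  exact h ⟨k, e⟩

/-- Overspill: a definable property of all numerals holds for some non-standard element. -/
theorem PAModel.overspill {a : M} (ha : ¬ IsStd a) {D : M → Prop} (hD : DefPred D)
    (h : ∀ n : ℕ, D n) : ∃ x, ¬ IsStd x ∧ D x := by
  by_contra! hc
  have key : ∀ x : M, D x ∧ x < a := fun x => by
    refine PAModel.induction' (fun x => D x ∧ x < a) (hD := ⟨inferInstance⟩)
      ⟨by simpa using h 0, by simpa using cast_lt_of_not_isStd ha 0⟩ (fun x hx => ?_) x
    obtain ⟨n, rfl⟩ := isStd_iff.1 (not_imp_comm.1 (hc x) (not_not.2 hx.1))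
    exact ⟨by simpa using h (n + 1), by simpa using cast_lt_of_not_isStd ha (n + 1)⟩
  exact lt_irrefl a (key a).2

theorem PAModel.div_unique {m q r q' r' : M} (hr : r < m) (hr' : r' < m)
    (h : q * m + r = q' * m + r') : q = q' ∧ r = r' := by
  have key : ∀ {q r q' r' : M}, r < m → q * m + r = q' * m + r' → q' ≤ q := by
    intro q r q' r' hr h
    by_contra hq
    obtain ⟨z, rfl⟩ := lt_iff_exists.1 (not_le.1 hq)
    have h1 : q * m + r < q * m + m := by gcongr
    have h2 : q * m + m ≤ q * m + m + (z * m + r') := le_self_add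
    have h3 : (q + z + 1) * m + r' = q * m + m + (z * m + r') := by ring
    rw [h, h3] at h1
    exact absurd h1 (not_lt.2 h2)
  have hq : q = q' := le_antisymm (key hr' h.symm) (key hr h)
  subst hq
  exact ⟨rfl, add_left_cancel h⟩

end PA

end Arith

namespace Arith

section Coding

variable {M : Type*} [arith.Structure M] [PAModel M]

/-! ### Binary digits -/

theorem PAModel.digit_expansion {q : ℕ → M} {X : Set ℕ}
    (h : ∀ i, (i ∈ X ∧ q i = 2 * q (i + 1) + 1) ∨ (i ∉ X ∧ q i = 2 * q (i + 1))) (i : ℕ) :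
    ∃ r : ℕ, r < 2 ^ i ∧ q 0 = q i * (2 ^ i : ℕ) + r := by
  induction i with
  | zero => exact ⟨0, by simp, by simp⟩
  | succ i ih =>
    obtain ⟨r, hr, e⟩ := ih
    rcases h i with ⟨-, hi⟩ | ⟨-, hi⟩
    · refine ⟨2 ^ i + r, by rw [pow_succ]; omega, ?_⟩
      rw [e, hi]
      push_cast
      ring
    · refine ⟨r, by rw [pow_succ]; omega, ?_⟩
      rw [e, hi]
      push_cast
      ring

theorem PAModel.digitB_iff {x : M} {i : ℕ} : digitB x i ↔
    ∃ u v : M, x = u * (2 ^ (i + 1) : ℕ) + ((2 ^ i : ℕ) + v) ∧ v < (2 ^ i : ℕ) := by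
  simp only [digitB, PAModel.numeral_eq]
  rfl

theorem PAModel.digitB_iff_mem {q : ℕ → M} {X : Set ℕ}
    (h : ∀ i, (i ∈ X ∧ q i = 2 * q (i + 1) + 1) ∨ (i ∉ X ∧ q i = 2 * q (i + 1))) (i : ℕ) :
    digitB (q 0) i ↔ i ∈ X := by
  rw [PAModel.digitB_iff]
  obtain ⟨r, hr, e⟩ := PAModel.digit_expansion h i
  rcases h i with ⟨hX, hi⟩ | ⟨hX, hi⟩
  · refine iff_of_true ⟨q (i + 1), r, ?_, by exact_mod_cast hr⟩ hX
    rw [e, hi]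
    push_cast
    ring
  · refine iff_of_false ?_ hX
    rintro ⟨u, v, e', hv⟩
    obtain ⟨v, hv', rfl⟩ := PAModel.exists_cast_of_lt hv
    have e'' : q (i + 1) * (2 ^ (i + 1) : ℕ) + r =
        u * (2 ^ (i + 1) : ℕ) + ((2 ^ i + v : ℕ) : M) := by
      rw [hi] at e
      push_cast at e e' ⊢
      rw [← e', e]
      ring
    have h1 : r < 2 ^ (i + 1) := by rw [pow_succ]; omega
    have h2 : 2 ^ i + v < 2 ^ (i + 1) := by rw [pow_succ]; omega
    have := (PAModel.div_unique (by exact_mod_cast h1) (by exact_mod_cast h2) e'').2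
    have : r = 2 ^ i + v := by exact_mod_cast this
    omega

theorem PAModel.not_isStd_of_digits {q : ℕ → M} {X : Set ℕ}
    (h : ∀ i, (i ∈ X ∧ q i = 2 * q (i + 1) + 1) ∨ (i ∉ X ∧ q i = 2 * q (i + 1)))
    (hne : ∀ i, q i ≠ 0) : ¬ IsStd (q 0) := by
  rw [PAModel.isStd_iff]
  rintro ⟨n, hn⟩
  obtain ⟨r, -, e⟩ := PAModel.digit_expansion h n
  have h1 : (1 : M) ≤ q n := by
    have := PAModel.add_one_le_iff'.2 (pos_iff_ne_zero.2 (hne n))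
    rwa [_root_.zero_add] at this
  have h2 : (n : M) < (2 ^ n : ℕ) := by exact_mod_cast Nat.lt_two_pow_self
  have h3 : ((2 ^ n : ℕ) : M) ≤ q n * (2 ^ n : ℕ) := le_mul_of_one_le_left (zero_le) h1
  have h4 : q n * (2 ^ n : ℕ) ≤ q 0 := by rw [e]; exact le_self_add
  exact absurd (h2.trans_le (h3.trans h4)) (by rw [hn]; exact lt_irrefl _)

theorem PAModel.mem_SSy_of_digits {q : ℕ → M} {X : Set ℕ}
    (h : ∀ i, (i ∈ X ∧ q i = 2 * q (i + 1) + 1) ∨ (i ∉ X ∧ q i = 2 * q (i + 1)))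
    (hne : ∀ i, q i ≠ 0) : X ∈ SSy M :=
  ⟨q 0, PAModel.not_isStd_of_digits h hne, fun i => (PAModel.digitB_iff_mem h i).symm⟩

/-! ### Coding of sequences and pairs -/

/-- `y` is the `i`-th entry of the sequence coded by `c` and `d`. -/
def Entry (c d i y : M) : Prop :=
  ∃ q, c = q * ((i + 1) * d + 1) + y ∧ y < (i + 1) * d + 1

instance {c d i y : (ℕ → M) → M} [TermFun c] [TermFun d] [TermFun i] [TermFun y] :
    DefProp fun v => Entry (c v) (d v) (i v) (y v) := by
  have h : DefProp fun v : ℕ → M => Entry (v 0) (v 1) (v 2) (v 3) := by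
    unfold Entry
    infer_instance
  refine h.subst (fun v => fun
    | 0 => c v
    | 1 => d v
    | 2 => i v
    | _ => y v) fun n => ?_
  match n with
  | 0 | 1 | 2 | _ + 3 => assumption

theorem Entry.unique {c d i y y' : M} (h : Entry c d i y) (h' : Entry c d i y') : y = y' := by
  obtain ⟨q, hq, hy⟩ := h
  obtain ⟨q', hq', hy'⟩ := h'
  exact (PAModel.div_unique hy hy' (hq.symm.trans hq')).2

theorem exists_entry (s : ℕ → ℕ) (n : ℕ) :
    ∃ c d : ℕ, ∀ i < n, Entry (M := M) c d i (s i) := by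
  let l := List.ofFn fun i : Fin n => s i
  refine ⟨(Nat.unbeta l).unpair.1, (Nat.unbeta l).unpair.2, fun i hi => ?_⟩
  have h := Nat.beta_unbeta_coe l ⟨i, by simpa [l] using hi⟩
  have h' : Nat.beta (Nat.unbeta l) i = s i := by simpa [l] using h
  rw [Nat.beta] at h'
  set c := (Nat.unbeta l).unpair.1
  set d := (Nat.unbeta l).unpair.2
  have h1 := Nat.div_add_mod' c ((i + 1) * d + 1)
  have h2 := Nat.mod_lt c (Nat.succ_pos ((i + 1) * d))
  rw [h'] at h1
  rw [Nat.succ_eq_add_one, h'] at h2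
  exact ⟨(c / ((i + 1) * d + 1) : ℕ), by exact_mod_cast h1.symm, by exact_mod_cast h2⟩

/-- `z` is the code of the pair of `x` and `y`. -/
def IsPair (x y z : M) : Prop := (x < y ∧ z = y * y + x) ∨ (¬ x < y ∧ z = x * x + x + y)

instance {x y z : (ℕ → M) → M} [TermFun x] [TermFun y] [TermFun z] :
    DefProp fun v => IsPair (x v) (y v) (z v) := by
  unfold IsPair
  infer_instance

@[simp] theorem isPair_cast {x y : ℕ} {z : M} : IsPair (x : M) y z ↔ z = (Nat.pair x y : ℕ) := by
  unfold IsPair Nat.pair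
  by_cases h : x < y <;> simp [h]

theorem isPair_cast_right {x y : M} {n : ℕ} :
    IsPair x y (n : M) ↔ x = (n.unpair.1 : ℕ) ∧ y = (n.unpair.2 : ℕ) := by
  constructor
  · intro h
    have hxy : x ≤ n ∧ y ≤ n := by
      rcases h with ⟨hlt, h⟩ | ⟨-, h⟩
      · refine ⟨h ▸ le_add_self,
          h ▸ le_add_of_le_of_nonneg (le_mul_of_one_le_left zero_le ?_) zero_le⟩
        have := PAModel.add_one_le_iff'.2 (pos_of_gt hlt)
        rwa [_root_.zero_add] at this
      · exact ⟨h ▸ le_add_of_le_of_nonneg le_add_self zero_le, h ▸ le_add_self⟩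
    obtain ⟨a, -, rfl⟩ := PAModel.exists_cast_of_le hxy.1
    obtain ⟨b, -, rfl⟩ := PAModel.exists_cast_of_le hxy.2
    rw [isPair_cast, Nat.cast_inj] at h
    rw [h, Nat.unpair_pair]
    exact ⟨rfl, rfl⟩
  · rintro ⟨rfl, rfl⟩
    rw [isPair_cast, Nat.pair_unpair]

/-! ### Representability of relatively recursive functions -/

/-- `G` represents the partial function `f` on its domain. -/
def Represents (G : M → M → Prop) (f : ℕ →. ℕ) : Prop :=
  ∀ n m : ℕ, m ∈ f n → ∀ y : M, G n y ↔ y = m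

set_option synthInstance.maxHeartbeats 200000 in
set_option synthInstance.maxSize 1000 in
theorem RecursiveIn.exists_represents {X : Set ℕ} {D : M → Prop} (hdef : DefPred D)
    (hD : ∀ n : ℕ, D n ↔ n ∈ X) {f : ℕ →. ℕ} (hf : RecursiveIn (charFn X) f) :
    ∃ G : M → M → Prop, DefRel G ∧ Represents G f := by
  induction hf with
  | zero =>
    refine ⟨fun _ y => y = 0, ⟨inferInstance⟩, fun n m h y => ?_⟩
    obtain rfl := Part.mem_some_iff.1 h
    simp
  | succ =>
    refine ⟨fun x y => y = x + 1, ⟨inferInstance⟩, fun n m h y => ?_⟩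
    obtain rfl := Part.mem_some_iff.1 h
    simp
  | left =>
    refine ⟨fun x y => ∃ z, IsPair y z x, ⟨inferInstance⟩, fun n m h y => ?_⟩
    obtain rfl := Part.mem_some_iff.1 h
    simp [isPair_cast_right]
  | right =>
    refine ⟨fun x y => ∃ z, IsPair z y x, ⟨inferInstance⟩, fun n m h y => ?_⟩
    obtain rfl := Part.mem_some_iff.1 h
    simp [isPair_cast_right]
  | oracle =>
    refine ⟨fun x y => (D x ∧ y = 1) ∨ (¬ D x ∧ y = 0), ⟨inferInstance⟩, fun n m h y => ?_⟩
    obtain rfl := Part.mem_some_iff.1 h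
    by_cases hn : n ∈ X <;> simp [hD, hn, charFn]
  | @pair f g _ _ ihf ihg =>
    obtain ⟨F, hF, hf⟩ := ihf
    obtain ⟨G, hG, hg⟩ := ihg
    refine ⟨fun x y => ∃ a b, F x a ∧ G x b ∧ IsPair a b y, ⟨inferInstance⟩, fun n m h y => ?_⟩
    simp only [Seq.seq, Part.mem_bind_iff, Part.map_eq_map, Part.mem_map_iff] at h
    obtain ⟨_, ⟨a, ha, rfl⟩, b, hb, rfl⟩ := h
    simp [hf n a ha, hg n b hb]
  | @comp f g _ _ ihf ihg =>
    obtain ⟨F, hF, hf⟩ := ihf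
    obtain ⟨G, hG, hg⟩ := ihg
    refine ⟨fun x y => ∃ z, G x z ∧ F z y, ⟨inferInstance⟩, fun n m h y => ?_⟩
    obtain ⟨k, hk, hm⟩ := Part.mem_bind_iff.1 h
    simp [hg n k hk, hf k m hm]
  | @prec f g _ _ ihf ihg =>
    obtain ⟨F, hF, hf⟩ := ihf
    obtain ⟨G, hG, hg⟩ := ihg
    refine ⟨fun x y => ∃ a k, IsPair a k x ∧ ∃ c d, (∃ z, Entry c d 0 z ∧ F a z) ∧
      (∀ j, j < k → ∃ u w p r, Entry c d j u ∧ Entry c d (j + 1) w ∧ IsPair j u p ∧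
        IsPair a p r ∧ G r w) ∧ Entry c d k y, ⟨inferInstance⟩, fun n m h y => ?_⟩
    rw [Nat.unpaired] at h
    simp only [isPair_cast_right]
    generalize n.unpair.1 = a at h ⊢
    generalize n.unpair.2 = k at h ⊢
    obtain ⟨s, h0, hs, rfl⟩ : ∃ s : ℕ → ℕ, s 0 ∈ f a ∧
        (∀ j < k, s (j + 1) ∈ g (Nat.pair a (Nat.pair j (s j)))) ∧ s k = m := by
      induction k generalizing m with
      | zero => exact ⟨fun _ => m, h, by simp, rfl⟩
      | succ k ih =>
        obtain ⟨i, hi, hm⟩ := Part.mem_bind_iff.1 h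
        obtain ⟨s, h0, hs, rfl⟩ := ih i hi
        refine ⟨fun j => if j = k + 1 then m else s j, by simpa using h0, fun j hj => ?_, by simp⟩
        rcases Nat.lt_succ_iff_lt_or_eq.1 hj with hj | rfl
        · have h1 : j ≠ k := hj.ne
          have h2 : j ≠ k + 1 := (hj.trans (Nat.lt_succ_self k)).ne
          simpa [h1, h2] using hs j hj
        · simpa using hm
    have hf' := hf _ _ h0
    have hg' := fun j hj => hg _ _ (hs j hj)
    constructor
    · rintro ⟨_, _, ⟨rfl, rfl⟩, c, d, ⟨z, hz, hz'⟩, hstep, hy⟩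
      have key : ∀ j ≤ k, Entry c d (j : M) (s j) := by
        intro j
        induction j with
        | zero =>
          intro _
          rw [hf'] at hz'
          simpa [hz'] using hz
        | succ j ih =>
          intro hj
          obtain ⟨u, w, p, r, hu, hw, hp, hr, hG⟩ := hstep j (by exact_mod_cast hj)
          obtain rfl := hu.unique (ih (Nat.le_of_succ_le hj))
          obtain rfl := isPair_cast.1 hp
          obtain rfl := isPair_cast.1 hr
          rw [hg' j hj] at hG
          simpa [hG] using hw
      exact hy.unique (key k le_rfl)
    · rintro rfl
      obtain ⟨c, d, hcd⟩ := exists_entry (M := M) s (k + 1)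
      refine ⟨a, k, ⟨rfl, rfl⟩, c, d, ⟨s 0, by simpa using hcd 0 (Nat.succ_pos k), (hf' _).2 rfl⟩,
        fun j hj => ?_, hcd k (Nat.lt_succ_self k)⟩
      obtain ⟨j, hjk, rfl⟩ := PAModel.exists_cast_of_lt hj
      exact ⟨s j, s (j + 1), _, _, hcd j (hjk.trans (Nat.lt_succ_self k)),
        by simpa using hcd (j + 1) (Nat.succ_lt_succ hjk), isPair_cast.2 rfl, isPair_cast.2 rfl,
        (hg' j hjk _).2 rfl⟩
  | @rfind f _ ih =>
    obtain ⟨F, hF, hf⟩ := ih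
    have hdef : DefRel fun x y : M => (∃ p, IsPair x y p ∧ F p 0) ∧
        ∀ j, j < y → ∃ p z, IsPair x j p ∧ z ≠ 0 ∧ F p z := ⟨inferInstance⟩
    refine ⟨_, hdef, fun n m h y => ?_⟩
    obtain ⟨h0, hlt⟩ := Nat.mem_rfind.1 h
    obtain ⟨z, hz, hz0⟩ := (Part.mem_map_iff _).1 h0
    obtain rfl : z = 0 := by simpa using hz0
    have hlt' : ∀ j < m, ∃ z ≠ 0, z ∈ f (Nat.pair n j) := fun j hj => by
      obtain ⟨z, hz, hz0⟩ := (Part.mem_map_iff _).1 (hlt hj)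
      exact ⟨z, by simpa using hz0, hz⟩
    constructor
    · rintro ⟨⟨p, hp, hp0⟩, hy⟩
      rcases lt_trichotomy y m with h | h | h
      · obtain ⟨j, hj, rfl⟩ := PAModel.exists_cast_of_lt h
        obtain ⟨z, hz, hz'⟩ := hlt' j hj
        rw [isPair_cast.1 hp, hf _ _ hz'] at hp0
        exact (hz (by exact_mod_cast hp0.symm)).elim
      · exact h
      · obtain ⟨p, z, hp, hz', hF⟩ := hy m h
        rw [isPair_cast.1 hp, hf _ _ hz] at hF
        exact (hz' (by simpa using hF)).elim
    · rintro rfl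
      refine ⟨⟨_, isPair_cast.2 rfl, (hf _ _ hz _).2 Nat.cast_zero.symm⟩, fun j hj => ?_⟩
      obtain ⟨j, hjk, rfl⟩ := PAModel.exists_cast_of_lt hj
      obtain ⟨z, hz, hz'⟩ := hlt' j hjk
      exact ⟨_, z, isPair_cast.2 rfl, by exact_mod_cast hz, (hf _ _ hz' _).2 rfl⟩

end Coding

end Arith

namespace Arith

/-! ### Standard systems are Scott sets -/

section StandardSystem

variable {M : Type*} [arith.Structure M] [PAModel M]

theorem exists_digits (n : ℕ) (X : Set ℕ) : ∃ s : ℕ → ℕ, ∀ i < n, s i ≠ 0 ∧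
    ((i ∈ X ∧ s i = 2 * s (i + 1) + 1) ∨ (i ∉ X ∧ s i = 2 * s (i + 1))) := by
  suffices h : ∃ s : ℕ → ℕ, (∀ i, s i ≠ 0) ∧ ∀ i < n,
      (i ∈ X ∧ s i = 2 * s (i + 1) + 1) ∨ (i ∉ X ∧ s i = 2 * s (i + 1)) by
    obtain ⟨s, h1, h2⟩ := h
    exact ⟨s, fun i hi => ⟨h1 i, h2 i hi⟩⟩
  induction n generalizing X with
  | zero => exact ⟨fun _ => 1, by simp, by simp⟩
  | succ n ih =>
    obtain ⟨s, h1, h2⟩ := ih {i | i + 1 ∈ X}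
    by_cases h0 : 0 ∈ X
    · refine ⟨fun i => Nat.casesOn i (2 * s 0 + 1) s, fun i => ?_, fun i hi => ?_⟩
      · cases i with
        | zero => exact Nat.succ_ne_zero _
        | succ i => exact h1 i
      · cases i with
        | zero => exact Or.inl ⟨h0, rfl⟩
        | succ i => exact h2 i (Nat.lt_of_succ_lt_succ hi)
    · refine ⟨fun i => Nat.casesOn i (2 * s 0) s, fun i => ?_, fun i hi => ?_⟩
      · cases i with
        | zero => exact mul_ne_zero two_ne_zero (h1 0)
        | succ i => exact h1 i
      · cases i with
        | zero => exact Or.inr ⟨h0, rfl⟩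
        | succ i => exact h2 i (Nat.lt_of_succ_lt_succ hi)

/-- In a non-standard model, the trace on `ℕ` of a definable set belongs to the standard
system. -/
theorem mem_SSy_of_defPred {a : M} (ha : ¬ IsStd a) {D : M → Prop} (hD : DefPred D) :
    {n : ℕ | D n} ∈ SSy M := by
  have hdef : DefPred fun n : M => ∃ c d, ∀ i, i < n → ∃ y z, Entry c d i y ∧
      Entry c d (i + 1) z ∧ y ≠ 0 ∧ ((D i ∧ y = 2 * z + 1) ∨ (¬ D i ∧ y = 2 * z)) :=
    ⟨inferInstance⟩
  obtain ⟨N, hN, c, d, h⟩ := PAModel.overspill ha hdef fun n => by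
    obtain ⟨s, hs⟩ := exists_digits n {n : ℕ | D n}
    obtain ⟨c, d, hcd⟩ := exists_entry (M := M) s (n + 1)
    refine ⟨c, d, fun i hi => ?_⟩
    obtain ⟨i, hin, rfl⟩ := PAModel.exists_cast_of_lt hi
    refine ⟨s i, s (i + 1), hcd i (hin.trans (Nat.lt_succ_self n)),
      by simpa using hcd (i + 1) (Nat.succ_lt_succ hin), by exact_mod_cast (hs i hin).1, ?_⟩
    exact (hs i hin).2.imp (fun h => ⟨h.1, by exact_mod_cast h.2⟩)
      (fun h => ⟨h.1, by exact_mod_cast h.2⟩)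
  choose y z hy hz hne hyz using fun i : ℕ => h i (PAModel.cast_lt_of_not_isStd hN i)
  have hzy : ∀ i, z i = y (i + 1) := fun i => by
    have := hy (i + 1)
    rw [Nat.cast_succ] at this
    exact (hz i).unique this
  simp only [hzy] at hyz
  exact PAModel.mem_SSy_of_digits hyz hne

/-- Every set in the standard system is the trace on `ℕ` of a definable set. -/
theorem exists_defPred_of_mem_SSy {X : Set ℕ} (hX : X ∈ SSy M) :
    ∃ D : M → Prop, DefPred D ∧ ∀ n : ℕ, D n ↔ n ∈ X := by
  obtain ⟨a, -, ha⟩ := hX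
  have hpow : Primrec fun n : ℕ => 2 ^ n := by
    refine (Primrec.nat_rec₁ 1 (f := fun _ k => 2 * k) ?_).of_eq fun n => ?_
    · exact Primrec.nat_mul.comp (Primrec.const 2) Primrec.snd
    · induction n with
      | zero => rfl
      | succ n ih => rw [pow_succ, ← ih, mul_comm]
  obtain ⟨G, hG, hrep⟩ := RecursiveIn.exists_represents (M := M) (X := ∅) (D := fun _ => False)
    ⟨inferInstance⟩ (by simp) (RecursiveIn.of_primrec hpow)
  refine ⟨fun i => ∃ p, G i p ∧ ∃ u w, a = u * (p + p) + (p + w) ∧ w < p, ⟨inferInstance⟩,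
    fun n => ?_⟩
  simp only [hrep n (2 ^ n) (Part.mem_some _), exists_eq_left]
  rw [ha, PAModel.digitB_iff, pow_succ, mul_two, Nat.cast_add]

theorem turingLE_mem_SSy {a : M} (ha : ¬ IsStd a) {X Y : Set ℕ} (hX : X ∈ SSy M)
    (h : TuringLE Y X) : Y ∈ SSy M := by
  obtain ⟨D, hD, hDX⟩ := exists_defPred_of_mem_SSy hX
  obtain ⟨G, hG, hrep⟩ := RecursiveIn.exists_represents hD hDX h
  have hdef : DefPred fun n : M => G n 1 := ⟨inferInstance⟩
  convert mem_SSy_of_defPred ha hdef using 1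
  ext n
  have := hrep n _ (Part.mem_some _) 1
  rw [Set.mem_ofPred_eq, this]
  by_cases hn : n ∈ Y <;> simp [charFn, hn]

theorem turingJoin_mem_SSy {a : M} (ha : ¬ IsStd a) {X Y : Set ℕ} (hX : X ∈ SSy M)
    (hY : Y ∈ SSy M) : turingJoin X Y ∈ SSy M := by
  obtain ⟨D, hD, hDX⟩ := exists_defPred_of_mem_SSy hX
  obtain ⟨E, hE, hEY⟩ := exists_defPred_of_mem_SSy hY
  have hdef : DefPred fun n : M => (∃ m, n = 2 * m ∧ D m) ∨ ∃ m, n = 2 * m + 1 ∧ E m :=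
    ⟨inferInstance⟩
  convert mem_SSy_of_defPred ha hdef using 1
  ext n
  have hle : ∀ {m : M}, m ≤ n → ∃ k : ℕ, m = k := fun h => by
    obtain ⟨k, -, e⟩ := PAModel.exists_cast_of_le h
    exact ⟨k, e⟩
  refine or_congr ⟨?_, ?_⟩ ⟨?_, ?_⟩
  · rintro ⟨m, hm, rfl⟩
    exact ⟨m, by push_cast; rfl, (hDX m).2 hm⟩
  · rintro ⟨m, hm, hDm⟩
    obtain ⟨k, rfl⟩ := hle (m := m) (by rw [hm, two_mul]; exact le_self_add)
    exact ⟨k, (hDX k).1 hDm, by exact_mod_cast hm⟩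
  · rintro ⟨m, hm, rfl⟩
    exact ⟨m, by push_cast; rfl, (hEY m).2 hm⟩
  · rintro ⟨m, hm, hDm⟩
    obtain ⟨k, rfl⟩ := hle (m := m) (by rw [hm, two_mul, add_assoc]; exact le_self_add)
    exact ⟨k, (hEY k).1 hDm, by exact_mod_cast hm⟩

theorem TreeInf.exists_length {T : Set ℕ} (hT : IsBinTreeSet T) (hinf : TreeInf T) (n : ℕ) :
    ∃ l : List Bool, l.length = n ∧ Encodable.encode l ∈ T := by
  obtain ⟨l, hl, hn⟩ : ∃ l : List Bool, Encodable.encode l ∈ T ∧ n ≤ l.length := by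
    by_contra! h
    exact hinf ((List.finite_length_lt Bool n).subset fun l hl => h l hl)
  exact ⟨l.take n, by simpa using hn, hT l hl _ (List.take_prefix n l)⟩

theorem encode_cons_bool (b : Bool) (l : List Bool) :
    Encodable.encode (b :: l) = Nat.pair b.toNat (Encodable.encode l) + 1 := by
  cases b <;> rfl

theorem exists_path_mem_SSy {a : M} (ha : ¬ IsStd a) {T : Set ℕ} (hT : T ∈ SSy M)
    (htree : IsBinTreeSet T) (hinf : TreeInf T) : ∃ P ∈ SSy M, PathThrough P T := by
  have hg : Primrec fun n => Encodable.encode (strOf n).reverse :=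
    Primrec.encode.comp (Primrec.list_reverse.comp primrec_strOf)
  obtain ⟨D, hD, hDT⟩ := exists_defPred_of_mem_SSy
    (turingLE_mem_SSy ha hT (turingLE_preimage (X := T) hg))
  have hDT : ∀ l : List Bool, D (Encodable.encode l : ℕ) ↔ Encodable.encode l.reverse ∈ T :=
    fun l => by rw [hDT, Set.mem_preimage, strOf_encode]
  have hpair0 : ∀ (u : ℕ) (p : M), IsPair 0 (u : M) p ↔ p = (Nat.pair 0 u : ℕ) := fun u p => by
    simpa using isPair_cast (x := 0) (y := u) (z := p)
  have hpair1 : ∀ (u : ℕ) (p : M), IsPair 1 (u : M) p ↔ p = (Nat.pair 1 u : ℕ) := fun u p => by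
    simpa using isPair_cast (x := 1) (y := u) (z := p)
  have hdef : DefPred fun n : M => ∃ c d, Entry c d 0 0 ∧ ∀ i, i < n → ∃ u p, Entry c d i u ∧
      Entry c d (i + 1) (p + 1) ∧ D u ∧ (IsPair 0 u p ∨ IsPair 1 u p) :=
    ⟨inferInstance⟩
  obtain ⟨N, hN, c, d, h0, h⟩ := PAModel.overspill ha hdef fun n => by
    obtain ⟨l, hl, hlT⟩ := hinf.exists_length htree n
    obtain ⟨c, d, hcd⟩ := exists_entry (M := M)
      (fun i => Encodable.encode (l.take i).reverse) (n + 1)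
    refine ⟨c, d, by simpa using hcd 0 n.succ_pos, fun i hi => ?_⟩
    obtain ⟨i, hin, rfl⟩ := PAModel.exists_cast_of_lt hi
    have hi' : i < l.length := hl ▸ hin
    have hsucc : (l.take (i + 1)).reverse = l[i] :: (l.take i).reverse := by
      rw [List.take_succ_eq_append_getElem hi', List.reverse_append]
      rfl
    have h1 := hcd (i + 1) (Nat.succ_lt_succ hin)
    rw [hsucc, encode_cons_bool] at h1
    refine ⟨_, _, hcd i (hin.trans (Nat.lt_succ_self n)), by simpa using h1, ?_, ?_⟩
    · rw [hDT, List.reverse_reverse]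
      exact htree l hlT _ (List.take_prefix i l)
    · cases l[i]
      · exact Or.inl ((hpair0 _ _).2 rfl)
      · exact Or.inr ((hpair1 _ _).2 rfl)
  have hdefP : DefPred fun i : M => ∃ u p, Entry c d i u ∧ Entry c d (i + 1) (p + 1) ∧
      IsPair 1 u p := ⟨inferInstance⟩
  refine ⟨_, mem_SSy_of_defPred ha hdefP, fun f hf m => ?_⟩
  have key : ∀ i : ℕ, Entry c d (i : M)
      (Encodable.encode (List.ofFn fun j : Fin i => f j).reverse : ℕ) := by
    intro i
    induction i with
    | zero => simpa using h0
    | succ i ih =>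
      obtain ⟨u, p, hu, hp, -, hup⟩ := h i (PAModel.cast_lt_of_not_isStd hN i)
      obtain rfl := hu.unique ih
      have hofn : (List.ofFn fun j : Fin (i + 1) => f j).reverse =
          f i :: (List.ofFn fun j : Fin i => f j).reverse := by
        rw [List.ofFn_succ_last, List.reverse_append]
        rfl
      rw [hofn, encode_cons_bool]
      generalize Encodable.encode (List.ofFn fun j : Fin i => f j).reverse = e at *
      have hmem : f i = true ↔ IsPair 1 (e : M) p := by
        rw [hf]
        refine ⟨?_, fun h => ⟨_, p, hu, hp, h⟩⟩
        rintro ⟨u', p', hu', hp', h'⟩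
        obtain rfl := hu.unique hu'
        obtain rfl := add_right_cancel (hp.unique hp')
        exact h'
      push_cast
      rcases hup with h' | h'
      · have hfi : f i = false := by
          rw [← Bool.not_eq_true, hmem, hpair1, (hpair0 _ _).1 h', Nat.cast_inj, Nat.pair_eq_pair]
          simp
        rw [hfi]
        rw [(hpair0 _ _).1 h'] at hp
        exact hp
      · rw [hmem.2 h']
        rw [(hpair1 _ _).1 h'] at hp
        exact hp
  obtain ⟨u, p, hu, -, hDu, -⟩ := h m (PAModel.cast_lt_of_not_isStd hN m)
  rw [hu.unique (key m), hDT, List.reverse_reverse] at hDu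
  exact hDu

/-- The standard system of a non-standard model is a Scott set. -/
theorem scottSet_SSy {a : M} (ha : ¬ IsStd a) : ScottSet (SSy M) :=
  ⟨⟨_, mem_SSy_of_defPred ha (D := fun _ => True) ⟨inferInstance⟩⟩,
    ⟨fun _ hX _ hY => turingJoin_mem_SSy ha hX hY, fun _ hX _ h => turingLE_mem_SSy ha hX h⟩,
    fun _ hT h h' => exists_path_mem_SSy ha hT h h'⟩

/-! ### Non-standard elements -/

theorem nonstandardModel_iff : NonstandardModel M ↔ ∃ a : M, ¬ IsStd a := by
  constructor
  · rintro ⟨-, h⟩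
    by_contra! hstd
    refine h ⟨FirstOrder.Language.Equiv.symm
      { toEquiv := _root_.Equiv.ofBijective (fun n : ℕ => (n : M))
          ⟨Nat.cast_injective, fun x => ?_⟩
        map_fun' := ?_
        map_rel' := ?_ }⟩
    · obtain ⟨n, rfl⟩ := PAModel.isStd_iff.1 (hstd x)
      exact ⟨n, rfl⟩
    · intro n g x
      cases g with
      | zero =>
        exact Nat.cast_zero.trans
          (congrArg (Structure.funMap (L := arith) arithFunc.zero) (Subsingleton.elim _ _))
      | one =>
        exact Nat.cast_one.trans
          (congrArg (Structure.funMap (L := arith) arithFunc.one) (Subsingleton.elim _ _))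
      | add =>
        refine (Nat.cast_add _ _).trans
          (congrArg (Structure.funMap (L := arith) arithFunc.add) ?_)
        funext i
        fin_cases i <;> rfl
      | mul =>
        refine (Nat.cast_mul _ _).trans
          (congrArg (Structure.funMap (L := arith) arithFunc.mul) ?_)
        funext i
        fin_cases i <;> rfl
    · intro n r x
      cases r with
      | lt =>
        refine Iff.trans (iff_of_eq (congrArg (Structure.RelMap (L := arith) arithRel.lt) ?_))
          (Nat.cast_lt (α := M) (m := x 0) (n := x 1))
        funext i
        fin_cases i <;> rfl
  · rintro ⟨a, ha⟩
    refine ⟨PAModel.out, fun ⟨e⟩ => ha ⟨e a, e.injective ?_⟩⟩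
    have key : ∀ n : ℕ, e (numeral M n) = n := fun n => by
      induction n with
      | zero => exact e.map_fun (L := arith) arithFunc.zero ![]
      | succ n ih =>
        refine (e.map_fun (L := arith) arithFunc.add ![numeral M n, oneM M]).trans ?_
        have h1 : e (oneM M) = 1 := e.map_fun (L := arith) arithFunc.one ![]
        exact congrArg₂ (· + ·) ih h1
    exact (key _).symm

end StandardSystem

end Arith

open Arith in
/-- **Scott's characterization.** A countable collection `S` of subsets of `ℕ` is a
Scott set iff `S` is the standard system of some countable non-standard model of `PA`. -/
theorem statement_1 (S : Set (Set ℕ)) (hS : S.Countable) :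
    ScottSet S ↔
      ∃ (M : Type) (_ : arith.Structure M),
        NonstandardModel M ∧ Countable M ∧ SSy M = S := by
  constructor
  · intro h
    obtain ⟨M, _, hM, hcount, hin, hout⟩ := h.exists_model hS
    have : PAModel M := ⟨hM⟩
    have hdouble : ∀ x : M, addM x x = 2 * x := fun x => (two_mul x).symm
    have hdoubleSucc : ∀ x : M, addM (2 * x) (oneM M) = 2 * x + 1 := fun _ => rfl
    have hzero : zeroM M = 0 := rfl
    simp only [hdouble, hdoubleSucc, hzero] at hin hout
    have hdig : ∀ A ∈ S, ∃ q : ℕ → M, (∀ i, (i ∈ A ∧ q i = 2 * q (i + 1) + 1) ∨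
        (i ∉ A ∧ q i = 2 * q (i + 1))) ∧ ∀ i, q i ≠ 0 := fun A hA => by
      obtain ⟨q, hq⟩ := hin A hA
      refine ⟨q, fun i => ?_, fun i => (hq i).1⟩
      by_cases hi : i ∈ A
      · exact Or.inl ⟨hi, (hq i).2.2 hi⟩
      · exact Or.inr ⟨hi, (hq i).2.1 hi⟩
    obtain ⟨A, hA⟩ := h.1
    obtain ⟨q, hq, hne⟩ := hdig A hA
    refine ⟨M, inferInstance, nonstandardModel_iff.2 ⟨q 0, PAModel.not_isStd_of_digits hq hne⟩,
      hcount, Set.Subset.antisymm ?_ ?_⟩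
    · rintro X ⟨a, -, ha⟩
      obtain ⟨q, rfl, hq, hmem⟩ := hout a
      convert hmem using 1
      ext i
      rw [ha]
      refine PAModel.digitB_iff_mem (fun i => ?_) i
      by_cases hi : q i = 2 * q (i + 1) + 1
      · exact Or.inl ⟨hi, hi⟩
      · exact Or.inr ⟨hi, (hq i).resolve_right hi⟩
    · intro X hX
      obtain ⟨q, hq, hne⟩ := hdig X hX
      exact PAModel.mem_SSy_of_digits hq hne
  · rintro ⟨M, _, hM, -, rfl⟩
    have : PAModel M := ⟨hM.1⟩
    obtain ⟨a, ha⟩ := nonstandardModel_iff.1 hM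
    exact scottSet_SSy ha
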